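/- arXiv:2209.06657 — 3 statements merged into one kernel-verified Lean document; each statement's English description precedes it below -/
import Mathlib

section
/- Let V be a real reflexive Banach space and let A : V → V* be a bounded operator, i.e. A maps bounded subsets of V to bounded subsets of V*. Then A is pseudo-monotone if and only if the following holds: for every sequence {u_m} converging weakly in V to some u with liminf_{m→∞} ⟨A(u_m), u_m − u⟩ ≥ 0, one has that A(u_m) converges to A(u) in the weak-star topology of V* and lim_{m→∞} ⟨A(u_m), u_m⟩ = ⟨A(u), u⟩. -/
open Filter Topology

/-- Weak convergence of a sequence in a normed space `V`: convergence tested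
against every continuous linear functional. -/
def WeaklyConvergesTo {V : Type*} [NormedAddCommGroup V] [NormedSpace ℝ V]
    (u : ℕ → V) (u₀ : V) : Prop :=
  ∀ f : StrongDual ℝ V, Tendsto (fun m => f (u m)) atTop (𝓝 (f u₀))

/-- An operator `A : V → V*` is pseudo-monotone if for every sequence `{u_m}`
converging weakly to `u` in `V` with `liminf ⟨A(u_m), u_m − u⟩ ≥ 0`, one has
`limsup ⟨A(u_m), u_m − v⟩ ≤ ⟨A(u), u − v⟩` for every `v ∈ V`. -/
def PseudoMonotone {V : Type*} [NormedAddCommGroup V] [NormedSpace ℝ V]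
    (A : V → StrongDual ℝ V) : Prop :=
  ∀ (u : ℕ → V) (u₀ : V), WeaklyConvergesTo u u₀ →
    0 ≤ liminf (fun m => A (u m) (u m - u₀)) atTop →
    ∀ v : V, limsup (fun m => A (u m) (u m - v)) atTop ≤ A u₀ (u₀ - v)

/-- For a bounded operator `A : V → V*` on a reflexive Banach space `V`,
pseudo-monotonicity is equivalent to: for every weakly convergent sequence
`u_m ⇀ u` with `liminf ⟨A(u_m), u_m − u⟩ ≥ 0`, the sequence `A(u_m)` converges
to `A(u)` in the weak-star topology of `V*` and `⟨A(u_m), u_m⟩ → ⟨A(u), u⟩`. -/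
theorem stmt_1 {V : Type*} [NormedAddCommGroup V] [NormedSpace ℝ V] [CompleteSpace V]
    (hrefl : Function.Surjective (NormedSpace.inclusionInDoubleDual ℝ V))
    (A : V → StrongDual ℝ V)
    (hbdd : ∀ s : Set V, Bornology.IsBounded s → Bornology.IsBounded (A '' s)) :
    PseudoMonotone A ↔
      ∀ (u : ℕ → V) (u₀ : V), WeaklyConvergesTo u u₀ →
        0 ≤ liminf (fun m => A (u m) (u m - u₀)) atTop →
        (∀ v : V, Tendsto (fun m => A (u m) v) atTop (𝓝 (A u₀ v))) ∧
          Tendsto (fun m => A (u m) (u m)) atTop (𝓝 (A u₀ u₀)) := by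
  constructor
  · intro hA u u₀ hu hlim
    have h1 := hA u u₀ hu hlim
    -- boundedness of the sequence
    obtain ⟨C, hC⟩ : ∃ C, ∀ m, ‖u m‖ ≤ C := by
      obtain ⟨C, hC⟩ := banach_steinhaus
        (g := fun m => NormedSpace.inclusionInDoubleDual ℝ V (u m)) (fun f => by
          obtain ⟨C, hC⟩ := (Metric.isBounded_range_of_tendsto _ (hu f)).exists_norm_le
          exact ⟨C, fun m => by simpa using hC _ ⟨m, rfl⟩⟩)
      refine ⟨C, fun m => ?_⟩
      have h := (NormedSpace.inclusionInDoubleDualLi ℝ (E := V)).norm_map (u m)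
      rw [← h]
      exact hC m
    obtain ⟨D, hD⟩ : ∃ D, ∀ m, ‖A (u m)‖ ≤ D := by
      have hb : Bornology.IsBounded (Set.range u) :=
        isBounded_iff_forall_norm_le.2 ⟨C, by rintro _ ⟨m, rfl⟩; exact hC m⟩
      obtain ⟨D, hD⟩ := (hbdd _ hb).exists_norm_le
      exact ⟨D, fun m => hD _ ⟨u m, ⟨m, rfl⟩, rfl⟩⟩
    have hD0 : 0 ≤ D := (norm_nonneg _).trans (hD 0)
    have habs : ∀ v m, |A (u m) (u m - v)| ≤ D * (C + ‖v‖) := by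
      intro v m
      have h2 : ‖u m - v‖ ≤ C + ‖v‖ := (norm_sub_le _ _).trans (by linarith [hC m])
      calc |A (u m) (u m - v)| = ‖A (u m) (u m - v)‖ := rfl
        _ ≤ ‖A (u m)‖ * ‖u m - v‖ := (A (u m)).le_opNorm _
        _ ≤ D * (C + ‖v‖) := mul_le_mul (hD m) h2 (norm_nonneg _) hD0
    have hup : ∀ v, IsBoundedUnder (· ≤ ·) atTop (fun m => A (u m) (u m - v)) := fun v =>
      isBoundedUnder_of ⟨_, fun m => (abs_le.1 (habs v m)).2⟩
    have hlo : ∀ v, IsBoundedUnder (· ≥ ·) atTop (fun m => A (u m) (u m - v)) := fun v =>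
      isBoundedUnder_of ⟨_, fun m => (abs_le.1 (habs v m)).1⟩
    have ha : Tendsto (fun m => A (u m) (u m - u₀)) atTop (𝓝 0) :=
      tendsto_of_le_liminf_of_limsup_le hlim (by simpa using h1 u₀) (hup u₀) (hlo u₀)
    have key : ∀ w : V, ∀ b, A u₀ w < b → ∀ᶠ m in atTop, A (u m) w < b := by
      intro w b hb
      have h2 := h1 (u₀ - w)
      rw [sub_sub_cancel] at h2
      have h3 := eventually_lt_of_limsup_lt
        (h2.trans_lt (show A u₀ w < (A u₀ w + b) / 2 by linarith)) (hup _)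
      have h4 := ha.eventually (lt_mem_nhds (show -((b - A u₀ w) / 2) < 0 by linarith))
      filter_upwards [h3, h4] with m h5 h6
      simp only [map_sub] at h5 h6
      linarith
    have hw : ∀ v : V, Tendsto (fun m => A (u m) v) atTop (𝓝 (A u₀ v)) := by
      intro v
      refine tendsto_order.2 ⟨fun b hb => ?_, fun b hb => key v b hb⟩
      filter_upwards [key (-v) (-b) (by simpa using hb)] with m hm
      simpa using hm
    refine ⟨hw, ?_⟩
    have h := ha.add (hw u₀)
    simpa using h
  · intro h u u₀ hu hlim v
    obtain ⟨h1, h2⟩ := h u u₀ hu hlim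
    have h3 := h2.sub (h1 v)
    simp only [← map_sub] at h3
    exact h3.limsup_eq.le
end

section
/- Let 1 ≤ p < ∞, T > 0, and let V, H, Y be Banach spaces with continuous embeddings V ⊂ H ⊂ Y, H separable, and with the embedding V ⊂ H compact. Let {Y_m}_{m∈ℕ} be a sequence of V-valued jointly measurable stochastic processes on [0,T] (each defined on a probability space, with ∫₀ᵀ‖Y_m(t)‖_V^p dt < ∞ almost surely) such that: (i) lim_{N→∞} sup_{m∈ℕ} ℙ[∫₀ᵀ ‖Y_m(t)‖_V^p dt > N] = 0; and (ii) for every ε > 0, lim_{δ→0⁺} sup_{m∈ℕ} ℙ[∫₀^{T−δ} ‖Y_m(t+δ) − Y_m(t)‖_Y^p dt > ε] = 0. Then the family of laws of {Y_m}, regarded as random elements of L^p(0,T;H), is tight on L^p(0,T;H). -/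
open Filter Topology MeasureTheory
open scoped ENNReal

theorem ehr1 {V H Yb : Type*}
    [NormedAddCommGroup V] [NormedSpace ℝ V]
    [NormedAddCommGroup H] [NormedSpace ℝ H]
    [NormedAddCommGroup Yb] [NormedSpace ℝ Yb]
    (eVH : V →L[ℝ] H) (hcpt : IsCompactOperator eVH)
    (eHY : H →L[ℝ] Yb) (heHY : Function.Injective eHY) (η : ℝ) (hη : 0 < η) :
    ∃ C : ℝ, 0 ≤ C ∧ ∀ v, ‖eVH v‖ ≤ η * ‖v‖ + C * ‖eHY (eVH v)‖ := by
  by_contra hcon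
  push Not at hcon
  have h1 : ∀ n : ℕ, ∃ w : V, ‖eVH w‖ = 1 ∧ ‖w‖ ≤ 1 / η ∧ n * ‖eHY (eVH w)‖ ≤ 1 := by
    intro n
    obtain ⟨v, hv⟩ := hcon n (Nat.cast_nonneg n)
    have hpos : 0 < ‖eVH v‖ := lt_of_le_of_lt (by positivity) hv
    have hn1 : 0 ≤ (n : ℝ) * ‖eHY (eVH v)‖ := by positivity
    have hn2 : 0 ≤ η * ‖v‖ := by positivity
    refine ⟨(‖eVH v‖)⁻¹ • v, ?_, ?_, ?_⟩
    · rw [map_smul, norm_smul, norm_inv, norm_norm, inv_mul_cancel₀ hpos.ne']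
    · rw [norm_smul, norm_inv, norm_norm, inv_mul_le_iff₀ hpos, mul_one_div, le_div_iff₀ hη]
      linarith
    · rw [map_smul, map_smul, norm_smul, norm_inv, norm_norm, mul_left_comm,
        inv_mul_le_iff₀ hpos]
      linarith
  choose w hw1 hw2 hw3 using h1
  obtain ⟨K, hK, hKs⟩ := IsCompactOperator.image_closedBall_subset_compact
    (f := (eVH : V →ₗ[ℝ] H)) hcpt (1 / η)
  have hwK : ∀ n, eVH (w n) ∈ K := fun n => hKs ⟨w n, by simpa using hw2 n, rfl⟩
  obtain ⟨x, -, φ, hφ, hx⟩ := hK.tendsto_subseq hwK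
  have hx1 : ‖x‖ = 1 := by
    refine tendsto_nhds_unique hx.norm ?_
    simp [hw1]
  have hx2 : ‖eHY x‖ = 0 := by
    refine tendsto_nhds_unique ((eHY.continuous.tendsto x).comp hx).norm ?_
    have : Tendsto (fun n : ℕ => 1 / ((φ n : ℝ))) atTop (𝓝 0) :=
      (tendsto_one_div_atTop_nhds_zero_nat (𝕜 := ℝ)).comp hφ.tendsto_atTop
    refine squeeze_zero' (Eventually.of_forall fun n => norm_nonneg _) ?_ this
    filter_upwards [eventually_gt_atTop 0] with n hn
    have : 0 < (φ n : ℝ) := by exact_mod_cast lt_of_lt_of_le hn (hφ.id_le n)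
    rw [le_div_iff₀ this, mul_comm]
    exact hw3 _
  have : x = 0 := heHY (by rw [map_zero]; exact norm_eq_zero.1 hx2)
  simp [this] at hx1

theorem ehr2 {V H Yb : Type*}
    [NormedAddCommGroup V] [NormedSpace ℝ V]
    [NormedAddCommGroup H] [NormedSpace ℝ H]
    [NormedAddCommGroup Yb] [NormedSpace ℝ Yb]
    (eVH : V →L[ℝ] H) (hcpt : IsCompactOperator eVH)
    (eHY : H →L[ℝ] Yb) (heHY : Function.Injective eHY) (p : ℝ) (hp : 1 ≤ p) (η : ℝ) (hη : 0 < η) :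
    ∃ C : ℝ, 0 ≤ C ∧ ∀ v w, ‖eVH v - eVH w‖ₑ ^ p ≤
      ENNReal.ofReal η * (‖v‖ₑ ^ p + ‖w‖ₑ ^ p)
        + ENNReal.ofReal C * ‖eHY (eVH v) - eHY (eVH w)‖ₑ ^ p := by
  have hp0 : 0 < p := by linarith
  set κ : ℝ := (η / 4 ^ p) ^ (1 / p) with hκ
  have hκ0 : 0 < κ := by positivity
  obtain ⟨C, hC, h⟩ := ehr1 eVH hcpt eHY heHY κ hκ0
  refine ⟨4 ^ p * C ^ p, by positivity, fun v w => ?_⟩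
  have hκp : 4 ^ p * κ ^ p = η := by
    rw [hκ, ← Real.rpow_mul (by positivity), one_div_mul_cancel hp0.ne', Real.rpow_one]
    field_simp
  have h0 := h (v - w)
  rw [map_sub, map_sub] at h0
  have key : ‖eVH v - eVH w‖ ^ p ≤ η * (‖v‖ ^ p + ‖w‖ ^ p)
      + 4 ^ p * C ^ p * ‖eHY (eVH v) - eHY (eVH w)‖ ^ p := by
    set a := ‖v‖
    set b := ‖w‖
    set c := ‖eHY (eVH v) - eHY (eVH w)‖
    have ha : 0 ≤ a := norm_nonneg _
    have hb : 0 ≤ b := norm_nonneg _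
    have hc : 0 ≤ c := norm_nonneg _
    have hvw : ‖v - w‖ ≤ a + b := norm_sub_le _ _
    set m := max (κ * a) (max (κ * b) (C * c))
    have hm0 : 0 ≤ m := le_max_of_le_left (by positivity)
    have h1 : ‖eVH v - eVH w‖ ≤ 4 * m := by
      have e1 : κ * a ≤ m := le_max_left _ _
      have e2 : κ * b ≤ m := (le_max_left _ _).trans (le_max_right _ _)
      have e3 : C * c ≤ m := (le_max_right _ _).trans (le_max_right _ _)
      nlinarith
    have h2 : m ^ p ≤ κ ^ p * a ^ p + κ ^ p * b ^ p + C ^ p * c ^ p := by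
      have e1 : 0 ≤ κ ^ p * a ^ p := by positivity
      have e2 : 0 ≤ κ ^ p * b ^ p := by positivity
      have e3 : 0 ≤ C ^ p * c ^ p := by positivity
      rcases max_choice (κ * a) (max (κ * b) (C * c)) with h | h
      · simp only [m, h]; rw [Real.mul_rpow hκ0.le ha]; linarith
      · rcases max_choice (κ * b) (C * c) with h' | h'
        · simp only [m, h, h']; rw [Real.mul_rpow hκ0.le hb]; linarith
        · simp only [m, h, h']; rw [Real.mul_rpow hC hc]; linarith
    calc _ ≤ (4 * m) ^ p := Real.rpow_le_rpow (norm_nonneg _) h1 hp0.le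
      _ = 4 ^ p * m ^ p := Real.mul_rpow (by norm_num) hm0
      _ ≤ 4 ^ p * (κ ^ p * a ^ p + κ ^ p * b ^ p + C ^ p * c ^ p) := by gcongr
      _ = (4 ^ p * κ ^ p) * (a ^ p + b ^ p) + 4 ^ p * C ^ p * c ^ p := by ring
      _ = _ := by rw [hκp]
  have := ENNReal.ofReal_le_ofReal key
  simp only [← ofReal_norm]
  simp only [ENNReal.ofReal_rpow_of_nonneg (norm_nonneg _) hp0.le]
  rw [← ENNReal.ofReal_add (by positivity) (by positivity), ← ENNReal.ofReal_mul (by positivity),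
    ← ENNReal.ofReal_mul (by positivity), ← ENNReal.ofReal_add (by positivity) (by positivity)]
  exact this

theorem avg_bound (T h : ℝ) (κ : ℝ → ℕ)
    (hκ : ∀ s t, 0 < s → 0 < t → κ s = κ t → s ≤ t + h)
    (g : ℝ → ℝ → ℝ≥0∞) (hg : Measurable (Function.uncurry g)) (hsym : ∀ s t, g s t = g t s)
    (hdiag : ∀ s, g s s = 0) :
    ∫⁻ s in Set.Ioc 0 T, ∫⁻ t in Set.Ioc 0 T, (if κ s = κ t then g s t else 0) ≤
      2 * ∫⁻ δ in Set.Ioc 0 h, ∫⁻ t in Set.Ioc 0 (T - δ), g (t + δ) t := by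
  classical
  let S : Set (ℝ × ℝ) := {q | 0 < q.2 ∧ q.2 < q.1 ∧ q.1 ≤ T ∧ q.1 ≤ q.2 + h}
  have hS : MeasurableSet S := by
    refine (measurableSet_lt measurable_const measurable_snd).inter
      ((measurableSet_lt measurable_snd measurable_fst).inter
      ((measurableSet_le measurable_fst measurable_const).inter
      (measurableSet_le measurable_fst (measurable_snd.add_const h))))
  let W : ℝ × ℝ → ℝ≥0∞ := S.indicator (Function.uncurry g)
  have hW : Measurable W := hg.indicator hS
  have hW2 : Measurable fun q : ℝ × ℝ => W (q.2, q.1) := hW.comp measurable_swap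
  have e1 : ∫⁻ s, ∫⁻ t, W (t, s) = ∫⁻ s, ∫⁻ t, W (s, t) :=
    lintegral_lintegral_swap hW2.aemeasurable
  have e2 : ∫⁻ s, ∫⁻ t, W (t, s) = ∫⁻ δ in Set.Ioc 0 h, ∫⁻ t in Set.Ioc 0 (T - δ), g (t + δ) t := by
    calc ∫⁻ s, ∫⁻ t, W (t, s) = ∫⁻ s, ∫⁻ δ, W (s + δ, s) := by
          refine lintegral_congr fun s => ?_
          exact (lintegral_add_left_eq_self (fun t => W (t, s)) s).symm
      _ = ∫⁻ δ, ∫⁻ s, W (s + δ, s) := by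
          refine lintegral_lintegral_swap (f := fun s δ => W (s + δ, s)) ?_
          exact (hW.comp ((measurable_fst.add measurable_snd).prodMk measurable_fst)).aemeasurable
      _ = _ := by
          rw [← lintegral_indicator measurableSet_Ioc]
          refine lintegral_congr fun δ => ?_
          by_cases hδ : δ ∈ Set.Ioc 0 h
          · rw [Set.indicator_of_mem hδ, ← lintegral_indicator measurableSet_Ioc]
            refine lintegral_congr fun t => ?_
            simp only [W, Set.indicator, S, Set.mem_setOf_eq, Function.uncurry, Set.mem_Ioc]
            obtain ⟨h1, h2⟩ := hδ
            refine if_congr ?_ rfl rfl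
            constructor
            · rintro ⟨a, b, c, d⟩; exact ⟨a, by linarith⟩
            · rintro ⟨a, b⟩; exact ⟨a, by linarith, by linarith, by linarith⟩
          · rw [Set.indicator_of_notMem hδ]
            refine (lintegral_congr fun t => ?_).trans lintegral_zero
            refine Set.indicator_of_notMem ?_ _
            rintro ⟨a, b, c, d⟩
            exact hδ ⟨by simpa using b, by simpa using d⟩
  rw [← e2, two_mul]
  nth_rewrite 2 [e1]
  rw [← lintegral_add_left (by exact hW2.lintegral_prod_right'), ← lintegral_indicator measurableSet_Ioc]
  refine lintegral_mono fun s => ?_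
  dsimp only
  rw [← lintegral_add_left (by exact hW2.comp (measurable_prodMk_left (x := s)))]
  by_cases hs : s ∈ Set.Ioc 0 T
  swap
  · rw [Set.indicator_of_notMem hs]; exact zero_le
  rw [Set.indicator_of_mem hs, ← lintegral_indicator measurableSet_Ioc]
  refine lintegral_mono fun t => ?_
  dsimp only
  by_cases ht : t ∈ Set.Ioc 0 T
  swap
  · rw [Set.indicator_of_notMem ht]; exact zero_le
  rw [Set.indicator_of_mem ht]
  split_ifs with hk
  swap
  · exact zero_le
  rcases lt_trichotomy s t with hst | hst | hst
  · have : (t, s) ∈ S := ⟨hs.1, hst, ht.2, hκ _ _ ht.1 hs.1 hk.symm⟩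
    simp only [W]
    rw [Set.indicator_of_mem this]
    simp only [Function.uncurry, hsym s t]
    exact le_self_add
  · subst hst; rw [hdiag]; exact zero_le
  · have : (s, t) ∈ S := ⟨ht.1, hst, hs.2, hκ _ _ hs.1 ht.1 hk⟩
    simp only [W]
    rw [Set.indicator_of_mem this]
    simp only [Function.uncurry]
    exact le_add_self

/-- step approximation -/
theorem step_approx {X : Type*} (T : ℝ) (n : ℕ) (hn : 0 < n) (hT : 0 < T)
    (v : ℝ → X) (N : X → ℝ≥0∞) (d : X → X → ℝ≥0∞)
    (hN : Measurable fun t => N (v t)) (hd : Measurable fun q : ℝ × ℝ => d (v q.1) (v q.2))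
    (A θ : ℝ≥0∞) (hA : A ≠ ⊤) (hA0 : A ≠ 0) (hθ : θ ≠ ⊤) (hθ0 : θ ≠ 0)
    (h1 : ∫⁻ t in Set.Ioc 0 T, N (v t) ≤ A)
    (h2 : ∫⁻ s in Set.Ioc 0 T, ∫⁻ t in Set.Ioc 0 T,
      (if ⌈s * n / T⌉₊ = ⌈t * n / T⌉₊ then d (v s) (v t) else 0) ≤ ENNReal.ofReal (T / n) * θ) :
    ∃ c : ℕ → X, (∀ j ∈ Finset.Icc 1 n, N (c j) ≤ 2 * A / ENNReal.ofReal (T / n)) ∧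
      ∫⁻ t in Set.Ioc 0 T, d (c ⌈t * n / T⌉₊) (v t) ≤ 2 * θ := by
  set κ : ℝ → ℕ := fun t => ⌈t * n / T⌉₊ with hκ
  have hκm : Measurable κ := Nat.measurable_ceil.comp ((measurable_id.mul_const _).div_const _)
  have hn' : (0 : ℝ) < n := by exact_mod_cast hn
  set h : ℝ≥0∞ := ENNReal.ofReal (T / n) with hh
  have hh0 : h ≠ 0 := by simp [hh]; positivity
  have hht : h ≠ ⊤ := ENNReal.ofReal_ne_top
  let I : ℕ → Set ℝ := fun j => Set.Ioc 0 T ∩ κ ⁻¹' {j}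
  have hIm : ∀ j, MeasurableSet (I j) := fun j =>
    measurableSet_Ioc.inter (hκm (measurableSet_singleton j))
  have hIeq : ∀ j ∈ Finset.Icc 1 n, I j = Set.Ioc ((j - 1 : ℝ) * (T / n)) (j * (T / n)) := by
    intro j hj
    rw [Finset.mem_Icc] at hj
    have hj1 : (1 : ℝ) ≤ j := by exact_mod_cast hj.1
    have hj2 : (j : ℝ) ≤ n := by exact_mod_cast hj.2
    ext t
    simp only [I, hκ, Set.mem_inter_iff, Set.mem_Ioc, Set.mem_preimage, Set.mem_singleton_iff]
    rw [Nat.ceil_eq_iff (by omega), Nat.cast_sub hj.1, Nat.cast_one]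
    have q1 : (j - 1 : ℝ) < t * n / T ↔ (j - 1 : ℝ) * (T / n) < t := by
      rw [lt_div_iff₀ hT, ← mul_div_assoc, div_lt_iff₀ hn']
    have q2 : t * n / T ≤ j ↔ t ≤ j * (T / n) := by
      rw [div_le_iff₀ hT, ← mul_div_assoc, le_div_iff₀ hn']
    rw [q1, q2]
    constructor
    · rintro ⟨_, h⟩; exact h
    · rintro ⟨a, b⟩
      refine ⟨⟨lt_of_le_of_lt ?_ a, b.trans ?_⟩, a, b⟩
      · have : 0 ≤ (j - 1 : ℝ) := by linarith
        positivity
      · rw [← mul_div_assoc, div_le_iff₀ hn']; nlinarith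
  have hIv : ∀ j ∈ Finset.Icc 1 n, volume (I j) = h := by
    intro j hj
    rw [hIeq j hj, Real.volume_Ioc, hh]; congr 1; ring
  have hU : Set.Ioc 0 T = ⋃ j ∈ Finset.Icc 1 n, I j := by
    ext t
    simp only [Set.mem_iUnion, I, Set.mem_inter_iff, Set.mem_preimage, Set.mem_singleton_iff,
      exists_prop]
    constructor
    · intro ht
      refine ⟨κ t, ?_, ht, rfl⟩
      have := ht.1
      rw [Finset.mem_Icc]
      refine ⟨Nat.one_le_iff_ne_zero.2 (Nat.ceil_pos.2 (by positivity)).ne', ?_⟩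
      refine Nat.ceil_le.2 ?_
      rw [div_le_iff₀ hT]; nlinarith [ht.2]
    · rintro ⟨_, _, h, _⟩; exact h
  have hsum : ∀ f : ℝ → ℝ≥0∞, ∫⁻ t in Set.Ioc 0 T, f t =
      ∑ j ∈ Finset.Icc 1 n, ∫⁻ t in I j, f t := by
    intro f
    rw [hU]
    refine lintegral_biUnion_finset ?_ (fun j _ => hIm j) f
    intro i _ j _ hij
    refine Set.disjoint_left.2 ?_
    rintro t ⟨_, h1⟩ ⟨_, h2⟩
    exact hij (h1.symm.trans h2)
  set lam : ℝ≥0∞ := h * θ / A with hlam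
  have hlam0 : lam ≠ 0 := by
    simp [hlam, ENNReal.div_eq_zero_iff, hh0, hθ0, hA]
  have hlamt : lam ≠ ⊤ := ENNReal.div_ne_top (ENNReal.mul_ne_top hht hθ) hA0
  let G : ℝ → ℝ≥0∞ := fun s => (∫⁻ t in Set.Ioc 0 T, if κ s = κ t then d (v s) (v t) else 0)
    + lam * N (v s)
  have hG : ∫⁻ s in Set.Ioc 0 T, G s ≤ 2 * (h * θ) := by
    rw [lintegral_add_right _ (hN.const_mul _), lintegral_const_mul _ hN, two_mul]
    refine add_le_add h2 ?_
    calc lam * _ ≤ lam * A := by gcongr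
      _ = h * θ := ENNReal.div_mul_cancel hA0 hA
  have hGm : Measurable G := by
    refine Measurable.add ?_ (hN.const_mul _)
    refine Measurable.lintegral_prod_right'
      (f := fun q : ℝ × ℝ => if κ q.1 = κ q.2 then d (v q.1) (v q.2) else 0) ?_
    refine Measurable.ite ?_ hd measurable_const
    exact measurableSet_eq_fun (hκm.comp measurable_fst) (hκm.comp measurable_snd)
  have hex : ∀ j, ∃ s, j ∈ Finset.Icc 1 n → s ∈ I j ∧ h * G s ≤ ∫⁻ s in I j, G s := by
    intro j
    by_cases hj : j ∈ Finset.Icc 1 n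
    swap
    · exact ⟨0, fun h => absurd h hj⟩
    obtain ⟨s, hs, hle⟩ := exists_le_setLAverage (μ := volume) (s := I j) (f := G)
      (by rw [hIv j hj]; exact hh0) (by rw [hIv j hj]; exact hht) hGm.aemeasurable
    refine ⟨s, fun _ => ⟨hs, ?_⟩⟩
    rw [setLAverage_eq, hIv j hj] at hle
    rw [mul_comm]
    exact (ENNReal.le_div_iff_mul_le (Or.inl hh0) (Or.inl hht)).1 hle
  choose s hs using hex
  refine ⟨fun j => v (s j), fun j hj => ?_, ?_⟩
  · have e1 : h * (lam * N (v (s j))) ≤ 2 * (h * θ) :=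
      calc h * (lam * N (v (s j))) ≤ h * G (s j) := by gcongr; exact le_add_self
        _ ≤ ∫⁻ s in I j, G s := (hs j hj).2
        _ ≤ ∫⁻ s in Set.Ioc 0 T, G s := lintegral_mono_set Set.inter_subset_left
        _ ≤ _ := hG
    rw [ENNReal.le_div_iff_mul_le (Or.inl hh0) (Or.inl hht)]
    have e2 : lam * (N (v (s j)) * h) ≤ lam * (2 * A) := by
      calc lam * (N (v (s j)) * h) = h * (lam * N (v (s j))) := by ring
        _ ≤ 2 * (h * θ) := e1
        _ = 2 * (lam * A) := by rw [hlam, ENNReal.div_mul_cancel hA0 hA]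
        _ = _ := by ring
    exact (ENNReal.mul_le_mul_iff_right hlam0 hlamt).1 e2
  · rw [hsum]
    have e3 : ∀ j ∈ Finset.Icc 1 n, h * ∫⁻ t in I j, d (v (s (κ t))) (v t) ≤ ∫⁻ s in I j, G s := by
      intro j hj
      refine le_trans ?_ (hs j hj).2
      gcongr
      refine le_trans ?_ le_self_add
      refine le_trans (le_of_eq ?_) (lintegral_mono_set (Set.inter_subset_left (t := κ ⁻¹' {j})))
      refine setLIntegral_congr_fun (hIm j) ?_
      intro t ht
      have : κ t = j := ht.2
      have h' : κ (s j) = j := (hs j hj).1.2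
      simp only [this, h', if_true]
    have e4 : h * ∑ j ∈ Finset.Icc 1 n, ∫⁻ t in I j, d (v (s (κ t))) (v t) ≤ h * (2 * θ) := by
      rw [Finset.mul_sum]
      refine (Finset.sum_le_sum e3).trans ?_
      rw [← hsum]
      refine hG.trans (le_of_eq (by ring))
    exact (ENNReal.mul_le_mul_iff_right hh0 hht).1 e4

theorem shift_le (T δ : ℝ) (hδ : 0 < δ) (f : ℝ → ℝ≥0∞) :
    ∫⁻ t in Set.Ioc 0 (T - δ), f (t + δ) ≤ ∫⁻ t in Set.Ioc 0 T, f t := by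
  rw [← lintegral_indicator measurableSet_Ioc, ← lintegral_indicator measurableSet_Ioc,
    ← lintegral_add_right_eq_self (fun t => (Set.Ioc 0 T).indicator f t) δ]
  refine lintegral_mono fun t => ?_
  dsimp only
  by_cases ht : t ∈ Set.Ioc 0 (T - δ)
  · have : t + δ ∈ Set.Ioc 0 T := ⟨by linarith [ht.1], by linarith [ht.2]⟩
    rw [Set.indicator_of_mem ht, Set.indicator_of_mem this]
  · rw [Set.indicator_of_notMem ht]; exact zero_le

theorem prob_avg {Ω : Type*} [MeasurableSpace Ω] (P : Measure Ω) [IsProbabilityMeasure P]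
    (F : ℝ → Ω → ℝ≥0∞) (hF : Measurable (Function.uncurry F)) (h : ℝ) (hh : 0 < h)
    (M a r θ : ℝ≥0∞) (hr : ∀ δ ∈ Set.Ioc 0 h, P {ω | a < F δ ω} ≤ r) :
    θ * P {ω | (∀ δ ∈ Set.Ioc 0 h, F δ ω ≤ M) ∧
      ENNReal.ofReal h * θ ≤ ∫⁻ δ in Set.Ioc 0 h, F δ ω} ≤ a + M * r := by
  have hh0 : ENNReal.ofReal h ≠ 0 := by simpa using hh
  have hF' : Measurable fun q : Ω × ℝ => min (F q.2 q.1) M :=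
    (hF.comp measurable_swap).min measurable_const
  have hm : Measurable fun ω => ∫⁻ δ in Set.Ioc 0 h, min (F δ ω) M :=
    Measurable.lintegral_prod_right' hF'
  have h1 := mul_meas_ge_le_lintegral (μ := P) hm (ENNReal.ofReal h * θ)
  have h2 : ∫⁻ ω, (∫⁻ δ in Set.Ioc 0 h, min (F δ ω) M) ∂P ≤ ENNReal.ofReal h * (a + M * r) := by
    rw [lintegral_lintegral_swap (f := fun ω δ => min (F δ ω) M) (by exact hF'.aemeasurable)]
    calc _ ≤ ∫⁻ δ in Set.Ioc 0 h, (a + M * r) := by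
          refine setLIntegral_mono measurable_const fun δ hδ => ?_
          have hms : MeasurableSet {ω | a < F δ ω} :=
            measurableSet_lt measurable_const (hF.comp measurable_prodMk_left)
          calc ∫⁻ ω, min (F δ ω) M ∂P ≤ ∫⁻ ω, (a + Set.indicator {ω | a < F δ ω} (fun _ => M) ω) ∂P := by
                refine lintegral_mono fun ω => ?_
                by_cases hω : a < F δ ω
                · dsimp only
                  rw [Set.indicator_of_mem (by exact hω)]
                  exact (min_le_right _ _).trans le_add_self
                · exact (min_le_left _ _).trans ((not_lt.1 hω).trans le_self_add)
            _ = a + M * P {ω | a < F δ ω} := by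
                rw [lintegral_add_left measurable_const, lintegral_indicator_const hms]; simp
            _ ≤ a + M * r := by gcongr; exact hr δ hδ
      _ = _ := by simp [mul_comm]
  have h3 : ENNReal.ofReal h * (θ * P {ω | (∀ δ ∈ Set.Ioc 0 h, F δ ω ≤ M) ∧
      ENNReal.ofReal h * θ ≤ ∫⁻ δ in Set.Ioc 0 h, F δ ω}) ≤ ENNReal.ofReal h * (a + M * r) := by
    refine le_trans ?_ (h1.trans h2)
    rw [← mul_assoc]
    gcongr
    rename_i ω
    rintro ⟨hω, hle⟩
    refine hle.trans (le_of_eq ?_)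
    refine setLIntegral_congr_fun measurableSet_Ioc fun δ hδ => ?_
    exact (min_eq_left (hω δ hδ)).symm
  exact (ENNReal.mul_le_mul_iff_right hh0 ENNReal.ofReal_ne_top).1 h3

theorem bdd_diff {V H : Type*}
    [NormedAddCommGroup V] [NormedSpace ℝ V]
    [NormedAddCommGroup H] [NormedSpace ℝ H]
    (eVH : V →L[ℝ] H) (p : ℝ) (hp : 1 ≤ p) :
    ∃ K : ℝ≥0∞, K ≠ ⊤ ∧ ∀ v w, ‖eVH v - eVH w‖ₑ ^ p ≤ K * (‖v‖ₑ ^ p + ‖w‖ₑ ^ p) := by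
  have hp0 : 0 ≤ p := by linarith
  refine ⟨‖eVH‖ₑ ^ p * 2 ^ (p - 1), ?_, fun v w => ?_⟩
  · refine ENNReal.mul_ne_top (ENNReal.rpow_ne_top_of_nonneg hp0 enorm_ne_top)
      (ENNReal.rpow_ne_top_of_nonneg (by linarith) (by simp))
  · calc ‖eVH v - eVH w‖ₑ ^ p ≤ (‖eVH‖ₑ * (‖v‖ₑ + ‖w‖ₑ)) ^ p := by
          refine ENNReal.rpow_le_rpow ?_ hp0
          rw [← map_sub]
          refine (eVH.le_opENorm _).trans ?_
          gcongr
          exact enorm_sub_le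
      _ = ‖eVH‖ₑ ^ p * (‖v‖ₑ + ‖w‖ₑ) ^ p := ENNReal.mul_rpow_of_nonneg _ _ hp0
      _ ≤ ‖eVH‖ₑ ^ p * (2 ^ (p - 1) * (‖v‖ₑ ^ p + ‖w‖ₑ ^ p)) := by
          gcongr; exact ENNReal.rpow_add_le_mul_rpow_add_rpow _ _ hp
      _ = _ := by ring

theorem conv_fast {V H : Type*}
    [NormedAddCommGroup V] [NormedSpace ℝ V] [MeasurableSpace V] [BorelSpace V]
    [NormedAddCommGroup H] [NormedSpace ℝ H]
    (eVH : V →L[ℝ] H) (hcpt : IsCompactOperator eVH) (p : ℝ) (hp : 1 ≤ p)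
    [Fact (1 ≤ ENNReal.ofReal p)] (μ : Measure ℝ)
    (f : ℕ → Lp H (ENNReal.ofReal p) μ) (v : ℕ → ℝ → V) (hv : ∀ n, Measurable (v n))
    (N : ℝ≥0∞) (hN : N ≠ ⊤) (hvN : ∀ n, ∫⁻ t, ‖v n t‖ₑ ^ p ∂μ ≤ N)
    (hf : ∀ n, ⇑(f n) =ᵐ[μ] fun t => eVH (v n t))
    (B : ℕ → ℝ≥0∞) (hB : ∑' i, B i ≠ ⊤)
    (hc : ∀ N n m : ℕ, N ≤ n → N ≤ m → edist (f n) (f m) < B N) :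
    ∃ g, Tendsto f atTop (𝓝 g) := by
  have hp0 : 0 < p := by linarith
  have hfm : ∀ n, AEStronglyMeasurable (f n) μ := fun n => Lp.aestronglyMeasurable (f n)
  have hc' : ∀ N n m : ℕ, N ≤ n → N ≤ m → eLpNorm (⇑(f n) - ⇑(f m)) (ENNReal.ofReal p) μ < B N := by
    intro N n m h1 h2
    rw [← Lp.edist_def]; exact hc N n m h1 h2
  have h1 : ∀ᵐ t ∂μ, ∃ l : UniformSpace.Completion H,
      Tendsto (fun n => ((f n t : H) : UniformSpace.Completion H)) atTop (𝓝 l) := by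
    refine Lp.ae_tendsto_of_cauchy_eLpNorm (p := ENNReal.ofReal p) (B := B)
      (f := fun n t => ((f n t : H) : UniformSpace.Completion H))
      (fun n => (UniformSpace.Completion.continuous_coe H).comp_aestronglyMeasurable (hfm n))
      Fact.out hB ?_
    intro N n m h1 h2
    refine lt_of_le_of_lt (le_of_eq ?_) (hc' N n m h1 h2)
    refine eLpNorm_congr_norm_ae (Eventually.of_forall fun t => ?_)
    simp only [Pi.sub_apply]
    rw [← UniformSpace.Completion.coe_sub, UniformSpace.Completion.norm_coe]
  have hnm : ∀ n, Measurable fun t => ‖v n t‖ₑ ^ p := fun n => (hv n).enorm.pow_const p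
  have h2 : ∀ᵐ t ∂μ, liminf (fun n => ‖v n t‖ₑ ^ p) atTop < ⊤ := by
    refine ae_lt_top (.liminf hnm) ?_
    refine ne_top_of_le_ne_top hN ((lintegral_liminf_le hnm).trans ?_)
    exact liminf_le_of_frequently_le' (Frequently.of_forall hvN)
  have h3 : ∀ᵐ t ∂μ, ∃ l : H, Tendsto (fun n => (f n t : H)) atTop (𝓝 l) := by
    filter_upwards [h1, h2, ae_all_iff.2 hf] with t ht1 ht2 ht3
    obtain ⟨l, hl⟩ := ht1
    have hcau : CauchySeq (fun n => (f n t : H)) := by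
      have := hl.cauchySeq
      rw [CauchySeq, ← (UniformSpace.Completion.isUniformInducing_coe H).cauchy_map_iff, Filter.map_map]
      exact this
    obtain ⟨R, hR1, hR2⟩ := exists_between ht2
    have hfr := frequently_lt_of_liminf_lt (by isBoundedDefault) hR1
    obtain ⟨K, hK, hKs⟩ := IsCompactOperator.image_closedBall_subset_compact
      (f := (eVH : V →ₗ[ℝ] H)) hcpt ((R ^ (1 / p)).toReal)
    obtain ⟨x, -, hx⟩ := hK.isSeqCompact.exists_tendsto_of_frequently_mem
      (u := fun n => (f n t : H)) (hfr.mono fun n hn => by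
        rw [ht3 n]
        refine hKs ⟨v n t, ?_, rfl⟩
        rw [mem_closedBall_zero_iff, ← toReal_enorm]
        refine ENNReal.toReal_mono (ENNReal.rpow_ne_top_of_nonneg (by positivity) hR2.ne) ?_
        rw [one_div, ENNReal.le_rpow_inv_iff hp0]
        exact hn.le) hcau
    exact ⟨x, hx⟩
  obtain ⟨g, hg, hlim⟩ := exists_stronglyMeasurable_limit_of_tendsto_ae hfm h3
  have hten := Lp.cauchy_tendsto_of_tendsto hfm g hB hc' hlim
  have hmem : MemLp g (ENNReal.ofReal p) μ :=
    Lp.memLp_of_cauchy_tendsto Fact.out (fun n => Lp.memLp (f n)) g hg.aestronglyMeasurable hten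
  refine ⟨hmem.toLp g, ?_⟩
  rw [tendsto_iff_edist_tendsto_0]
  refine hten.congr fun n => ?_
  rw [Lp.edist_def]
  refine eLpNorm_congr_ae ?_
  filter_upwards [hmem.coeFn_toLp] with t ht
  simp [ht]

theorem u_meas {α V H : Type*} [MeasurableSpace α]
    [NormedAddCommGroup V] [NormedSpace ℝ V] [MeasurableSpace V] [BorelSpace V]
    [NormedAddCommGroup H] [NormedSpace ℝ H] [TopologicalSpace.SeparableSpace H]
    (eVH : V →L[ℝ] H) (v : α → V) (hv : Measurable v) :
    StronglyMeasurable fun a => eVH (v a) := by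
  let _ : MeasurableSpace H := borel H
  have : BorelSpace H := ⟨rfl⟩
  have := UniformSpace.secondCountable_of_separable H
  exact (eVH.continuous.measurable.comp hv).stronglyMeasurable

theorem ceil_mem (T : ℝ) (hT : 0 < T) (n : ℕ) (hn : 0 < n) (t : ℝ) (ht : t ∈ Set.Ioc 0 T) :
    ⌈t * n / T⌉₊ ∈ Finset.Icc 1 n := by
  have := ht.1
  have hn' : (0 : ℝ) < n := by exact_mod_cast hn
  rw [Finset.mem_Icc]
  refine ⟨Nat.one_le_iff_ne_zero.2 (Nat.ceil_pos.2 (by positivity)).ne', ?_⟩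
  refine Nat.ceil_le.2 ?_
  rw [div_le_iff₀ hT]; nlinarith [ht.2]

def goodSet {V H : Type*}
    [NormedAddCommGroup V] [NormedSpace ℝ V] [MeasurableSpace V]
    [NormedAddCommGroup H] [NormedSpace ℝ H]
    (eVH : V →L[ℝ] H) (p T : ℝ) (N : ℝ≥0∞) (n : ℕ → ℕ) :
    Set (Lp H (ENNReal.ofReal p) (volume.restrict (Set.Ioc (0:ℝ) T))) :=
  {f | ∃ v : ℝ → V, Measurable v ∧ ∫⁻ t in Set.Ioc 0 T, ‖v t‖ₑ ^ p ≤ N ∧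
    (∀ k : ℕ, ∫⁻ s in Set.Ioc 0 T, ∫⁻ t in Set.Ioc 0 T,
      (if ⌈s * n k / T⌉₊ = ⌈t * n k / T⌉₊ then ‖eVH (v s) - eVH (v t)‖ₑ ^ p else 0)
        ≤ ENNReal.ofReal (T / n k) * ((k + 1 : ℕ) : ℝ≥0∞)⁻¹) ∧
    ⇑f =ᵐ[volume.restrict (Set.Ioc (0:ℝ) T)] fun t => eVH (v t)}

theorem goodSet_tb {V H : Type*}
    [NormedAddCommGroup V] [NormedSpace ℝ V] [MeasurableSpace V] [BorelSpace V]
    [NormedAddCommGroup H] [NormedSpace ℝ H] [TopologicalSpace.SeparableSpace H]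
    (eVH : V →L[ℝ] H) (hcpt : IsCompactOperator eVH)
    (p : ℝ) (hp : 1 ≤ p) [Fact (1 ≤ ENNReal.ofReal p)] (T : ℝ) (hT : 0 < T)
    (N : ℝ≥0∞) (hN : N ≠ ⊤) (hN0 : N ≠ 0) (n : ℕ → ℕ) (hn : ∀ k, 0 < n k) :
    TotallyBounded (goodSet eVH p T N n) := by
  have hp0 : 0 < p := by linarith
  rw [EMetric.totallyBounded_iff]
  intro r0 hr0
  set r : ℝ≥0∞ := min r0 1 with hr
  have hrpos : r ≠ 0 := by
    rw [hr]; exact (lt_min hr0 one_pos).ne'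
  have hrt : r ≠ ⊤ := ne_top_of_le_ne_top ENNReal.one_ne_top (min_le_right _ _)
  set q : ℝ≥0∞ := r ^ p / 2 with hq
  have hrp0 : r ^ p ≠ 0 := by simp [ENNReal.rpow_eq_zero_iff, hrpos, hrt]
  have hrpt : r ^ p ≠ ⊤ := ENNReal.rpow_ne_top_of_nonneg hp0.le hrt
  have hq0 : q ≠ 0 := (ENNReal.half_pos hrp0).ne'
  have hqt : q ≠ ⊤ := ENNReal.div_ne_top hrpt (by simp)
  set L : ℝ≥0∞ := 2 ^ (p - 1) with hL
  have hL0 : L ≠ 0 := by simp [hL, ENNReal.rpow_eq_zero_iff]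
  have hLt : L ≠ ⊤ := ENNReal.rpow_ne_top_of_nonneg (by linarith) (by simp)
  obtain ⟨k, hk⟩ := ENNReal.exists_inv_nat_lt
    (a := q / (L * 2)) (ENNReal.div_ne_zero.2 ⟨hq0, ENNReal.mul_ne_top hLt (by simp)⟩)
  have hk' : L * (2 * ((k + 1 : ℕ) : ℝ≥0∞)⁻¹) < q := by
    rw [← mul_assoc]
    refine ENNReal.mul_lt_of_lt_div' (lt_of_le_of_lt ?_ hk)
    rw [ENNReal.inv_le_inv]; exact_mod_cast Nat.le_succ k
  set c0 : ℝ≥0∞ := L * ENNReal.ofReal T with hc0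
  have hc0t : c0 ≠ ⊤ := ENNReal.mul_ne_top hLt ENNReal.ofReal_ne_top
  set ρ : ℝ≥0∞ := (q / c0) ^ (1 / p) with hρ
  have hρp : ρ ^ p = q / c0 := by
    rw [hρ, ← ENNReal.rpow_mul, one_div_mul_cancel hp0.ne', ENNReal.rpow_one]
  have hρ0 : 0 < ρ := by
    refine pos_iff_ne_zero.2 fun h => ?_
    rw [h, ENNReal.zero_rpow_of_pos hp0] at hρp
    exact ENNReal.div_ne_zero.2 ⟨hq0, hc0t⟩ hρp.symm
  set R : ℝ≥0∞ := 2 * N / ENNReal.ofReal (T / n k) with hR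
  have hnk : (0 : ℝ) < n k := by exact_mod_cast hn k
  have hRt : R ≠ ⊤ := ENNReal.div_ne_top (ENNReal.mul_ne_top (by simp) hN)
    (by simp; positivity)
  obtain ⟨K, hK, hKs⟩ := IsCompactOperator.image_closedBall_subset_compact
      (f := (eVH : V →ₗ[ℝ] H)) hcpt ((R ^ (1 / p)).toReal)
  obtain ⟨t0, ht0, hcov⟩ := EMetric.totallyBounded_iff.1 hK.totallyBounded ρ hρ0
  set t : Set H := insert 0 t0 with ht
  have htf : t.Finite := ht0.insert 0
  have : Finite t := htf
  set κ : ℝ → ℕ := fun s => ⌈s * n k / T⌉₊ with hκ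
  have hκm : Measurable κ := Nat.measurable_ceil.comp ((measurable_id.mul_const _).div_const _)
  let st : (Fin (n k + 1) → t) → ℝ → H := fun z s =>
    (fun j : ℕ => ((z ⟨min j (n k), by omega⟩ : t) : H)) (κ s)
  have hstm : ∀ z, StronglyMeasurable (st z) := fun z =>
    (StronglyMeasurable.of_discrete
      (f := fun j : ℕ => ((z ⟨min j (n k), by omega⟩ : t) : H))).comp_measurable hκm
  obtain ⟨C, hC⟩ := htf.isBounded.exists_norm_le
  have hst : ∀ z, MemLp (st z) (ENNReal.ofReal p) (volume.restrict (Set.Ioc (0:ℝ) T)) := fun z =>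
    MemLp.of_bound (hstm z).aestronglyMeasurable C
      (Eventually.of_forall fun s => hC _ (Subtype.mem _))
  refine ⟨Set.range fun z => (hst z).toLp (st z), Set.finite_range _, ?_⟩
  rintro f ⟨v, hv, hvN, hvk, hfv⟩
  have hu : StronglyMeasurable fun s => eVH (v s) := u_meas eVH v hv
  have hd : StronglyMeasurable fun w : ℝ × ℝ => eVH (v w.1) - eVH (v w.2) :=
    (hu.comp_measurable measurable_fst).sub (hu.comp_measurable measurable_snd)
  obtain ⟨c, hc1, hc2⟩ := step_approx T (n k) (hn k) hT v (fun x => ‖x‖ₑ ^ p)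
    (fun x y => ‖eVH x - eVH y‖ₑ ^ p) (hv.enorm.pow_const p) (hd.enorm.pow_const p) N
    ((k + 1 : ℕ) : ℝ≥0∞)⁻¹ hN hN0 (by simp) (by simp) hvN (hvk k)
  have hz : ∀ j : Fin (n k + 1), ∃ z : t, (j : ℕ) ∈ Finset.Icc 1 (n k) → edist (eVH (c j)) z < ρ := by
    intro j
    by_cases hj : (j : ℕ) ∈ Finset.Icc 1 (n k)
    swap
    · exact ⟨⟨0, Set.mem_insert _ _⟩, fun h => absurd h hj⟩
    have : eVH (c j) ∈ K := by
      refine hKs ⟨c j, ?_, rfl⟩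
      rw [mem_closedBall_zero_iff, ← toReal_enorm]
      refine ENNReal.toReal_mono (ENNReal.rpow_ne_top_of_nonneg (by positivity) hRt) ?_
      rw [one_div, ENNReal.le_rpow_inv_iff hp0]
      exact hc1 j hj
    have := hcov this
    simp only [Set.mem_iUnion] at this
    obtain ⟨y, hy, hyd⟩ := this
    exact ⟨⟨y, Set.mem_insert_of_mem _ hy⟩, fun _ => hyd⟩
  choose z hz using hz
  simp only [Set.mem_iUnion]
  refine ⟨_, ⟨z, rfl⟩, ?_⟩
  change edist f ((hst z).toLp (st z)) < r0
  refine lt_of_lt_of_le ?_ (min_le_left r0 1)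
  rw [Lp.edist_def, eLpNorm_eq_lintegral_rpow_enorm_toReal (by simpa using hp0) ENNReal.ofReal_ne_top,
    ENNReal.toReal_ofReal hp0.le, one_div, ENNReal.rpow_inv_lt_iff hp0]
  have hIoc : ∀ᵐ s ∂(volume.restrict (Set.Ioc (0:ℝ) T)), s ∈ Set.Ioc 0 T :=
    ae_restrict_mem measurableSet_Ioc
  calc ∫⁻ s in Set.Ioc 0 T, ‖(⇑f - ⇑((hst z).toLp (st z))) s‖ₑ ^ p
      ≤ ∫⁻ s in Set.Ioc 0 T, L * (‖eVH (c (κ s)) - eVH (v s)‖ₑ ^ p + ρ ^ p) := by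
        refine lintegral_mono_ae ?_
        filter_upwards [hfv, (hst z).coeFn_toLp, hIoc] with s h1 h2 h3
        have hκs := ceil_mem T hT (n k) (hn k) s h3
        rw [Pi.sub_apply, h1, h2]
        have hle := (Finset.mem_Icc.1 hκs).2
        have e1 : st z s = z ⟨κ s, by exact Nat.lt_succ_of_le hle⟩ := by
          simp only [st]
          congr 3
          exact min_eq_left hle
        have e2 := hz ⟨κ s, by exact Nat.lt_succ_of_le hle⟩ hκs
        rw [e1]
        refine le_trans ?_ (ENNReal.rpow_add_le_mul_rpow_add_rpow _ _ hp |>.trans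
          (mul_le_mul_right (add_le_add_right (ENNReal.rpow_le_rpow e2.le hp0.le) _) _))
        refine ENNReal.rpow_le_rpow ?_ hp0.le
        rw [← edist_eq_enorm_sub, ← edist_eq_enorm_sub, edist_comm (eVH (c (κ s)))]
        exact edist_triangle _ _ _
    _ = L * (∫⁻ s in Set.Ioc 0 T, ‖eVH (c (κ s)) - eVH (v s)‖ₑ ^ p) + c0 * ρ ^ p := by
        rw [lintegral_const_mul' _ _ hLt, lintegral_add_right _ measurable_const, mul_add]
        simp [hc0]; ring
    _ ≤ L * (2 * ((k + 1 : ℕ) : ℝ≥0∞)⁻¹) + q := by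
        gcongr
        rw [hρp]; exact ENNReal.mul_div_le
    _ < q + q := ENNReal.add_lt_add_right hqt hk'
    _ = r ^ p := ENNReal.add_halves _

theorem goodSet_compact {V H : Type*}
    [NormedAddCommGroup V] [NormedSpace ℝ V] [MeasurableSpace V] [BorelSpace V]
    [NormedAddCommGroup H] [NormedSpace ℝ H] [TopologicalSpace.SeparableSpace H]
    (eVH : V →L[ℝ] H) (hcpt : IsCompactOperator eVH)
    (p : ℝ) (hp : 1 ≤ p) [Fact (1 ≤ ENNReal.ofReal p)] (T : ℝ) (hT : 0 < T)
    (N : ℝ≥0∞) (hN : N ≠ ⊤) (hN0 : N ≠ 0) (n : ℕ → ℕ) (hn : ∀ k, 0 < n k) :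
    IsCompact (closure (goodSet eVH p T N n)) := by
  rw [isCompact_iff_totallyBounded_isComplete]
  refine ⟨(goodSet_tb eVH hcpt p hp T hT N hN hN0 n hn).closure, ?_⟩
  rw [← completeSpace_coe_iff_isComplete]
  have hpos : ∀ i : ℕ, (0 : ℝ≥0∞) < 2⁻¹ ^ i := fun i => ENNReal.pow_pos (by simp) i
  refine EMetric.complete_of_convergent_controlled_sequences (fun i => 2⁻¹ ^ i) hpos ?_
  intro u hu
  have happ : ∀ i, ∃ x ∈ goodSet eVH p T N n, edist (u i).1 x < 2⁻¹ ^ i := fun i =>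
    EMetric.mem_closure_iff.1 (u i).2 _ (hpos i)
  choose x hx hxd using happ
  choose v hv hvN hvk hxv using hx
  have hmono : ∀ i j : ℕ, i ≤ j → (2⁻¹ : ℝ≥0∞) ^ j ≤ 2⁻¹ ^ i := fun i j hij =>
    pow_le_pow_right_of_le_one' (by simp) hij
  obtain ⟨g, hg⟩ := conv_fast eVH hcpt p hp (volume.restrict (Set.Ioc (0:ℝ) T)) x v hv N hN hvN hxv
    (fun i => 3 * 2⁻¹ ^ i) (by
      rw [ENNReal.tsum_mul_left, ENNReal.tsum_geometric]
      refine ENNReal.mul_ne_top (by simp) ?_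
      rw [ENNReal.one_sub_inv_two]; simp) (by
      intro i j l hj hl
      have e1 := (hxd j).trans_le (hmono i j hj)
      have e2 := (hxd l).trans_le (hmono i l hl)
      have e3 : edist (u j).1 (u l).1 < 2⁻¹ ^ i := hu i j l hj hl
      calc edist (x j) (x l) ≤ edist (x j) (u j).1 + edist (u j).1 (u l).1
            + edist (u l).1 (x l) := edist_triangle4 _ _ _ _
        _ < 2⁻¹ ^ i + 2⁻¹ ^ i + 2⁻¹ ^ i := by
          rw [edist_comm (x j)]
          exact ENNReal.add_lt_add (ENNReal.add_lt_add e1 e3) e2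
        _ = 3 * 2⁻¹ ^ i := by ring)
  have hug : Tendsto (fun i => (u i).1)
      atTop (𝓝 g) := by
    rw [tendsto_iff_edist_tendsto_0] at hg ⊢
    have hz : Tendsto (fun i : ℕ => (2⁻¹ : ℝ≥0∞) ^ i) atTop (𝓝 0) :=
      ENNReal.tendsto_pow_atTop_nhds_zero_of_lt_one (by simp)
    have := hz.add hg
    rw [add_zero] at this
    refine tendsto_of_tendsto_of_tendsto_of_le_of_le tendsto_const_nhds this
      (fun _ => zero_le) fun i => ?_
    exact (edist_triangle _ (x i) _).trans (add_le_add_left (hxd i).le _)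
  have hgm : g ∈ closure (goodSet eVH p T N n) :=
    isClosed_closure.mem_of_tendsto hug (Eventually.of_forall fun i => (u i).2)
  exact ⟨⟨g, hgm⟩, tendsto_subtype_rng.2 hug⟩

theorem trans_H {V H Yb : Type*}
    [NormedAddCommGroup V] [NormedSpace ℝ V] [MeasurableSpace V] [BorelSpace V]
    [NormedAddCommGroup H] [NormedSpace ℝ H] [TopologicalSpace.SeparableSpace H]
    [NormedAddCommGroup Yb] [NormedSpace ℝ Yb]
    (eVH : V →L[ℝ] H) (hcpt : IsCompactOperator eVH)
    (eHY : H →L[ℝ] Yb) (heHY : Function.Injective eHY)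
    (p : ℝ) (hp : 1 ≤ p) (T : ℝ)
    {Ω : ℕ → Type*} [∀ m, MeasurableSpace (Ω m)]
    (P : ∀ m, Measure (Ω m))
    (Y : ∀ m, Ω m → ℝ → V)
    (hmeas : ∀ m, Measurable fun q : Ω m × ℝ => Y m q.1 q.2)
    (hi : Tendsto (fun N : ℝ => ⨆ m, P m {ω | ENNReal.ofReal N <
        ∫⁻ t in Set.Ioc (0:ℝ) T, ‖Y m ω t‖ₑ ^ p}) atTop (𝓝 0))
    (hii : ∀ ε > (0:ℝ), Tendsto (fun δ : ℝ => ⨆ m, P m {ω | ENNReal.ofReal ε <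
        ∫⁻ t in Set.Ioc (0:ℝ) (T - δ),
          ‖eHY (eVH (Y m ω (t + δ))) - eHY (eVH (Y m ω t))‖ₑ ^ p})
        (𝓝[>] 0) (𝓝 0)) (ε : ℝ) (hε : 0 < ε) :
    Tendsto (fun δ : ℝ => ⨆ m, P m {ω | ENNReal.ofReal ε <
        ∫⁻ t in Set.Ioc (0:ℝ) (T - δ), ‖eVH (Y m ω (t + δ)) - eVH (Y m ω t)‖ₑ ^ p})
        (𝓝[>] 0) (𝓝 0) := by
  rw [ENNReal.tendsto_nhds_zero] at hi ⊢
  intro r hr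
  have hr2 : 0 < r / 2 := ENNReal.half_pos hr.ne'
  obtain ⟨N, hN, hN1⟩ := ((hi (r / 2) hr2).and (eventually_ge_atTop 1)).exists
  obtain ⟨C, hC, hCe⟩ := ehr2 eVH hcpt eHY heHY p hp (ε / (4 * N)) (by positivity)
  have h2 := ENNReal.tendsto_nhds_zero.1 (hii (ε / (2 * (C + 1))) (by positivity)) (r / 2) hr2
  filter_upwards [h2, self_mem_nhdsWithin] with δ hδ hδ0
  replace hδ0 : 0 < δ := hδ0
  refine iSup_le fun m => ?_
  rw [← ENNReal.add_halves r]
  refine le_trans (measure_mono ?_) ((measure_union_le _ _).trans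
    (add_le_add ((le_iSup _ m).trans hN) ((le_iSup _ m).trans hδ)))
  intro ω hω
  by_contra hcon
  rw [Set.mem_union, not_or] at hcon
  obtain ⟨h3, h4⟩ := hcon
  simp only [Set.mem_setOf_eq, not_lt] at h3 h4
  have hω' : ENNReal.ofReal ε <
        ∫⁻ t in Set.Ioc (0:ℝ) (T - δ), ‖eVH (Y m ω (t + δ)) - eVH (Y m ω t)‖ₑ ^ p := hω
  refine absurd hω' (not_lt.2 ?_)
  have hv : Measurable (Y m ω) := (hmeas m).comp measurable_prodMk_left
  have hv1 : Measurable fun t => ‖Y m ω t‖ₑ ^ p := hv.enorm.pow_const p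
  have hv2 : Measurable fun t => ‖Y m ω (t + δ)‖ₑ ^ p := hv1.comp (measurable_id.add_const δ)
  have hv3 : Measurable fun t => ENNReal.ofReal (ε / (4 * N)) *
      (‖Y m ω (t + δ)‖ₑ ^ p + ‖Y m ω t‖ₑ ^ p) := (hv2.add hv1).const_mul _
  calc _ ≤ ∫⁻ t in Set.Ioc (0:ℝ) (T - δ), (ENNReal.ofReal (ε / (4 * N)) *
          (‖Y m ω (t + δ)‖ₑ ^ p + ‖Y m ω t‖ₑ ^ p) + ENNReal.ofReal C *
          ‖eHY (eVH (Y m ω (t + δ))) - eHY (eVH (Y m ω t))‖ₑ ^ p) :=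
        lintegral_mono fun t => hCe _ _
    _ = ENNReal.ofReal (ε / (4 * N)) * ((∫⁻ t in Set.Ioc (0:ℝ) (T - δ), ‖Y m ω (t + δ)‖ₑ ^ p)
          + ∫⁻ t in Set.Ioc (0:ℝ) (T - δ), ‖Y m ω t‖ₑ ^ p) + ENNReal.ofReal C *
          ∫⁻ t in Set.Ioc (0:ℝ) (T - δ),
          ‖eHY (eVH (Y m ω (t + δ))) - eHY (eVH (Y m ω t))‖ₑ ^ p := by
        rw [lintegral_add_left hv3,
          lintegral_const_mul' _ _ ENNReal.ofReal_ne_top,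
          lintegral_const_mul' _ _ ENNReal.ofReal_ne_top, lintegral_add_left hv2]
    _ ≤ ENNReal.ofReal (ε / (4 * N)) * (ENNReal.ofReal N + ENNReal.ofReal N)
          + ENNReal.ofReal C * ENNReal.ofReal (ε / (2 * (C + 1))) := by
        gcongr
        · exact (shift_le T δ hδ0 fun t => ‖Y m ω t‖ₑ ^ p).trans h3
        · refine le_trans (lintegral_mono_set (Set.Ioc_subset_Ioc_right (by linarith))) h3
    _ = ENNReal.ofReal (ε / (4 * N) * (N + N) + C * (ε / (2 * (C + 1)))) := by
        rw [ENNReal.ofReal_add (by positivity) (by positivity), ENNReal.ofReal_mul (by positivity),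
          ENNReal.ofReal_mul (by positivity), ENNReal.ofReal_add (by positivity) (by positivity)]
    _ ≤ ENNReal.ofReal ε := by
        refine ENNReal.ofReal_le_ofReal ?_
        have e1 : ε / (4 * N) * (N + N) = ε / 2 := by field_simp; ring
        have e2 : C * (ε / (2 * (C + 1))) ≤ ε / 2 := by
          rw [← mul_div_assoc, div_le_div_iff₀ (by positivity) (by positivity)]
          nlinarith
        linarith

theorem pick_n {V H : Type*}
    [NormedAddCommGroup V] [NormedSpace ℝ V] [MeasurableSpace V] [BorelSpace V]
    [NormedAddCommGroup H] [NormedSpace ℝ H] [TopologicalSpace.SeparableSpace H]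
    (eVH : V →L[ℝ] H)
    (p : ℝ) (hp : 1 ≤ p) (T : ℝ) (hT : 0 < T)
    {Ω : ℕ → Type*} [∀ m, MeasurableSpace (Ω m)]
    (P : ∀ m, Measure (Ω m)) [∀ m, IsProbabilityMeasure (P m)]
    (Y : ∀ m, Ω m → ℝ → V)
    (hmeas : ∀ m, Measurable fun q : Ω m × ℝ => Y m q.1 q.2)
    (hii : ∀ ε > (0:ℝ), Tendsto (fun δ : ℝ => ⨆ m, P m {ω | ENNReal.ofReal ε <
        ∫⁻ t in Set.Ioc (0:ℝ) (T - δ), ‖eVH (Y m ω (t + δ)) - eVH (Y m ω t)‖ₑ ^ p})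
        (𝓝[>] 0) (𝓝 0))
    (N θ ε : ℝ≥0∞) (hN : N ≠ ⊤) (hθ0 : θ ≠ 0) (hθ : θ ≠ ⊤) (hε0 : ε ≠ 0) (hε : ε ≠ ⊤) :
    ∃ n : ℕ, 0 < n ∧ ∀ m, P m {ω | ∫⁻ t in Set.Ioc (0:ℝ) T, ‖Y m ω t‖ₑ ^ p ≤ N ∧
      ENNReal.ofReal (T / n) * θ < ∫⁻ s in Set.Ioc 0 T, ∫⁻ t in Set.Ioc 0 T,
        (if ⌈s * n / T⌉₊ = ⌈t * n / T⌉₊ then ‖eVH (Y m ω s) - eVH (Y m ω t)‖ₑ ^ p else 0)} ≤ ε := by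
  have hp0 : 0 < p := by linarith
  obtain ⟨K, hK, hKb⟩ := bdd_diff eVH p hp
  set M : ℝ≥0∞ := K * (N + N) with hM
  have hMt : M ≠ ⊤ := ENNReal.mul_ne_top hK (ENNReal.add_ne_top.2 ⟨hN, hN⟩)
  have hθ2 : θ / 2 ≠ 0 := (ENNReal.half_pos hθ0).ne'
  have hθ2t : θ / 2 ≠ ⊤ := ENNReal.div_ne_top hθ (by simp)
  set q : ℝ≥0∞ := θ / 2 * ε with hq
  have hq0 : q ≠ 0 := mul_ne_zero hθ2 hε0
  have hqt : q ≠ ⊤ := ENNReal.mul_ne_top hθ2t hε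
  have hq2 : q / 2 ≠ 0 := (ENNReal.half_pos hq0).ne'
  have hq2t : q / 2 ≠ ⊤ := ENNReal.div_ne_top hqt (by simp)
  have hr : 0 < q / 2 / M := pos_iff_ne_zero.2 (ENNReal.div_ne_zero.2 ⟨hq2, hMt⟩)
  have hev := ENNReal.tendsto_nhds_zero.1
    (hii (q / 2).toReal (ENNReal.toReal_pos hq2 hq2t)) _ hr
  rw [ENNReal.ofReal_toReal hq2t] at hev
  obtain ⟨h0, hh0, hsub⟩ := mem_nhdsGT_iff_exists_Ioo_subset.1 hev
  replace hh0 : 0 < h0 := hh0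
  obtain ⟨n, hn⟩ := exists_nat_gt (T / h0)
  have hn0 : (0 : ℝ) < n := lt_trans (by positivity) hn
  have hnn : 0 < n := by exact_mod_cast hn0
  have hTn : T / n < h0 := by
    rw [div_lt_iff₀ hh0] at hn; rw [div_lt_iff₀ hn0]; linarith
  refine ⟨n, hnn, fun m => ?_⟩
  let F : ℝ → Ω m → ℝ≥0∞ := fun δ ω =>
    ∫⁻ t in Set.Ioc (0:ℝ) (T - δ), ‖eVH (Y m ω (t + δ)) - eVH (Y m ω t)‖ₑ ^ p
  have hu := u_meas eVH _ (hmeas m)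
  have hF : Measurable (Function.uncurry F) := by
    have h1 : Measurable fun w : (ℝ × Ω m) × ℝ =>
        ‖eVH (Y m w.1.2 (w.2 + w.1.1)) - eVH (Y m w.1.2 w.2)‖ₑ ^ p := by
      refine (StronglyMeasurable.enorm ?_).pow_const p
      refine StronglyMeasurable.sub ?_ ?_
      · exact hu.comp_measurable ((measurable_snd.comp measurable_fst).prodMk
          (measurable_snd.add (measurable_fst.comp measurable_fst)))
      · exact hu.comp_measurable ((measurable_snd.comp measurable_fst).prodMk measurable_snd)
    have hs : MeasurableSet {w : (ℝ × Ω m) × ℝ | w.2 ∈ Set.Ioc 0 (T - w.1.1)} :=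
      (measurableSet_lt measurable_const measurable_snd).inter
        (measurableSet_le measurable_snd
          (measurable_const.sub (measurable_fst.comp measurable_fst)))
    have h2 := (h1.indicator hs).lintegral_prod_right' (ν := (volume : Measure ℝ))
    convert h2 using 1
    ext ⟨δ, ω⟩
    simp only [Function.uncurry, F]
    rw [← lintegral_indicator measurableSet_Ioc]
    rfl
  have key := prob_avg (P m) F hF (T / n) (by positivity) M (q / 2) (q / 2 / M) (θ / 2) (by
    intro δ hδ
    have := hsub (show δ ∈ Set.Ioo 0 h0 from ⟨hδ.1, hδ.2.trans_lt hTn⟩)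
    exact (le_iSup (fun m => P m {ω | q / 2 < ∫⁻ t in Set.Ioc (0:ℝ) (T - δ),
      ‖eVH (Y m ω (t + δ)) - eVH (Y m ω t)‖ₑ ^ p}) m).trans this)
  have key2 : θ / 2 * _ ≤ θ / 2 * ε := key.trans (by
    rw [← hq]
    calc q / 2 + M * (q / 2 / M) ≤ q / 2 + q / 2 := by gcongr; exact ENNReal.mul_div_le
      _ = q := ENNReal.add_halves q)
  refine le_trans (measure_mono ?_) ((ENNReal.mul_le_mul_iff_right hθ2 hθ2t).1 key2)
  rintro ω ⟨hA, hD⟩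
  have hv : Measurable (Y m ω) := (hmeas m).comp measurable_prodMk_left
  have hv1 : Measurable fun t => ‖Y m ω t‖ₑ ^ p := hv.enorm.pow_const p
  have huω := u_meas eVH _ hv
  refine ⟨fun δ hδ => ?_, ?_⟩
  · have hv2 : Measurable fun t => ‖Y m ω (t + δ)‖ₑ ^ p := hv1.comp (measurable_id.add_const δ)
    calc F δ ω ≤ ∫⁻ t in Set.Ioc (0:ℝ) (T - δ), K * (‖Y m ω (t + δ)‖ₑ ^ p + ‖Y m ω t‖ₑ ^ p) :=
          lintegral_mono fun t => hKb _ _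
      _ = K * ((∫⁻ t in Set.Ioc (0:ℝ) (T - δ), ‖Y m ω (t + δ)‖ₑ ^ p)
          + ∫⁻ t in Set.Ioc (0:ℝ) (T - δ), ‖Y m ω t‖ₑ ^ p) := by
          rw [lintegral_const_mul' _ _ hK, lintegral_add_left hv2]
      _ ≤ M := by
          rw [hM]
          gcongr
          · exact (shift_le T δ hδ.1 fun t => ‖Y m ω t‖ₑ ^ p).trans hA
          · refine le_trans (lintegral_mono_set (Set.Ioc_subset_Ioc_right (by linarith [hδ.1]))) hA
  · have hb := avg_bound T (T / n) (fun t => ⌈t * n / T⌉₊) (by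
        intro s t hs ht hst
        have hst' : ⌈s * n / T⌉₊ = ⌈t * n / T⌉₊ := hst
        have e1 : s * n / T ≤ ⌈s * n / T⌉₊ := Nat.le_ceil _
        have e2 : (⌈t * n / T⌉₊ : ℝ) < t * n / T + 1 := Nat.ceil_lt_add_one (by positivity)
        rw [hst'] at e1
        have e3 : s * n / T ≤ t * n / T + 1 := e1.trans e2.le
        have e4 : s * n / T * (T / n) ≤ (t * n / T + 1) * (T / n) := by gcongr
        have e5 : s * n / T * (T / n) = s := by field_simp
        have e6 : (t * n / T + 1) * (T / n) = t + T / n := by field_simp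
        linarith)
      (fun s t => ‖eVH (Y m ω s) - eVH (Y m ω t)‖ₑ ^ p)
      ((((huω.comp_measurable measurable_fst).sub
        (huω.comp_measurable measurable_snd)).enorm).pow_const p)
      (fun s t => by rw [enorm_sub_rev]) (fun s => by simp [hp0])
    have h3 : ENNReal.ofReal (T / n) * θ ≤ 2 * ∫⁻ δ in Set.Ioc 0 (T / n), F δ ω := hD.le.trans hb
    have h4 : 2 * (ENNReal.ofReal (T / n) * (θ / 2)) = ENNReal.ofReal (T / n) * θ := by
      rw [mul_left_comm, ENNReal.mul_div_cancel (by simp) (by simp)]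
    rw [← h4] at h3
    exact (ENNReal.mul_le_mul_iff_right (by simp) (by simp)).1 h3

/-- Lemma 5.2 of [MRSSTZ]: given continuous embeddings `V ⊂ H ⊂ Y` with
`V ⊂ H` compact, if the processes `Y_m` satisfy the uniform `L^p(0,T;V)`
boundedness in probability (i) and the uniform time-translation estimate in
the `Y`-norm (ii), then the laws of `Y_m`, regarded as random elements of
`L^p(0,T;H)`, form a tight family. -/
theorem stmt_8 {V H Yb : Type*}
    [NormedAddCommGroup V] [NormedSpace ℝ V] [MeasurableSpace V] [BorelSpace V]
    [NormedAddCommGroup H] [NormedSpace ℝ H] [TopologicalSpace.SeparableSpace H]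
    [NormedAddCommGroup Yb] [NormedSpace ℝ Yb]
    (eVH : V →L[ℝ] H) (heVH : Function.Injective eVH) (hcpt : IsCompactOperator eVH)
    (eHY : H →L[ℝ] Yb) (heHY : Function.Injective eHY)
    (p : ℝ) (hp : 1 ≤ p) [Fact (1 ≤ ENNReal.ofReal p)] (T : ℝ) (hT : 0 < T)
    {Ω : ℕ → Type*} [∀ m, MeasurableSpace (Ω m)]
    (P : ∀ m, Measure (Ω m)) [∀ m, IsProbabilityMeasure (P m)]
    (Y : ∀ m, Ω m → ℝ → V)
    (hmeas : ∀ m, Measurable fun q : Ω m × ℝ => Y m q.1 q.2)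
    (hfin : ∀ m, ∀ᵐ ω ∂(P m),
      (∫⁻ t in Set.Ioc (0:ℝ) T, (‖Y m ω t‖₊ : ℝ≥0∞) ^ p) < ⊤)
    -- (i)
    (hi : Tendsto (fun N : ℝ => ⨆ m, P m {ω | ENNReal.ofReal N <
        ∫⁻ t in Set.Ioc (0:ℝ) T, (‖Y m ω t‖₊ : ℝ≥0∞) ^ p}) atTop (𝓝 0))
    -- (ii)
    (hii : ∀ ε > (0:ℝ), Tendsto (fun δ : ℝ => ⨆ m, P m {ω | ENNReal.ofReal ε <
        ∫⁻ t in Set.Ioc (0:ℝ) (T - δ),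
          (‖eHY (eVH (Y m ω (t + δ))) - eHY (eVH (Y m ω t))‖₊ : ℝ≥0∞) ^ p})
        (𝓝[>] 0) (𝓝 0)) :
    ∀ ε > (0:ℝ),
      ∃ K : Set (Lp H (ENNReal.ofReal p) (volume.restrict (Set.Ioc (0:ℝ) T))),
        IsCompact K ∧ ∀ m, ENNReal.ofReal (1 - ε) ≤
          P m {ω | ∃ g ∈ K,
            ⇑g =ᵐ[volume.restrict (Set.Ioc (0:ℝ) T)] fun t => eVH (Y m ω t)} := by
  intro ε hε
  have hp0 : 0 < p := by linarith
  have hii' := trans_H eVH hcpt eHY heHY p hp T P Y hmeas hi hii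
  have hε2 : 0 < ENNReal.ofReal ε / 2 := ENNReal.half_pos (by simpa using hε)
  obtain ⟨N, hN, hN1⟩ :=
    ((ENNReal.tendsto_nhds_zero.1 hi _ hε2).and (eventually_ge_atTop 1)).exists
  obtain ⟨e, he0, hesum⟩ := ENNReal.exists_pos_sum_of_countable' hε2.ne' ℕ
  have het : ∀ k, e k ≠ ⊤ := fun k => ne_top_of_le_ne_top
    (hesum.trans_le le_top).ne (ENNReal.le_tsum k)
  have hpick : ∀ k : ℕ, _ := fun k => pick_n eVH p hp T hT P Y hmeas hii' (ENNReal.ofReal N)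
    ((k + 1 : ℕ) : ℝ≥0∞)⁻¹ (e k) ENNReal.ofReal_ne_top (by simp) (by simp) (he0 k).ne' (het k)
  choose n hn hnP using hpick
  refine ⟨closure (goodSet eVH p T (ENNReal.ofReal N) n),
    goodSet_compact eVH hcpt p hp T hT _ ENNReal.ofReal_ne_top (by simp; linarith) n hn,
    fun m => ?_⟩
  set G : Set (Ω m) := {ω | ∃ g ∈ closure (goodSet eVH p T (ENNReal.ofReal N) n),
            ⇑g =ᵐ[volume.restrict (Set.Ioc (0:ℝ) T)] fun t => eVH (Y m ω t)} with hG
  set B0 : Set (Ω m) := {ω | ENNReal.ofReal N < ∫⁻ t in Set.Ioc (0:ℝ) T, ‖Y m ω t‖ₑ ^ p} with hB0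
  set B : ℕ → Set (Ω m) := fun k => {ω | ∫⁻ t in Set.Ioc (0:ℝ) T, ‖Y m ω t‖ₑ ^ p ≤ ENNReal.ofReal N ∧
      ENNReal.ofReal (T / n k) * ((k + 1 : ℕ) : ℝ≥0∞)⁻¹ <
        ∫⁻ s in Set.Ioc 0 T, ∫⁻ t in Set.Ioc 0 T,
        (if ⌈s * n k / T⌉₊ = ⌈t * n k / T⌉₊ then
          ‖eVH (Y m ω s) - eVH (Y m ω t)‖ₑ ^ p else 0)} with hB
  have hcover : Set.univ ⊆ G ∪ (B0 ∪ ⋃ k, B k) := by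
    intro ω _
    by_cases h1 : ω ∈ B0
    · exact Or.inr (Or.inl h1)
    by_cases h2 : ω ∈ ⋃ k, B k
    · exact Or.inr (Or.inr h2)
    left
    have h1' : ∫⁻ t in Set.Ioc (0:ℝ) T, ‖Y m ω t‖ₑ ^ p ≤ ENNReal.ofReal N := not_lt.1 h1
    have hv : Measurable (Y m ω) := (hmeas m).comp measurable_prodMk_left
    have hu := u_meas eVH _ hv
    obtain ⟨K, hK, hKb⟩ := bdd_diff eVH p hp
    have hmem : MemLp (fun t => eVH (Y m ω t)) (ENNReal.ofReal p)
        (volume.restrict (Set.Ioc (0:ℝ) T)) := by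
      refine ⟨hu.aestronglyMeasurable, ?_⟩
      rw [eLpNorm_lt_top_iff_lintegral_rpow_enorm_lt_top (by simpa using hp0)
        ENNReal.ofReal_ne_top, ENNReal.toReal_ofReal hp0.le]
      refine lt_of_le_of_lt (b := K * ENNReal.ofReal N) ?_
        (ENNReal.mul_lt_top hK.lt_top ENNReal.ofReal_lt_top)
      refine le_trans ?_ (mul_le_mul_right h1' K)
      rw [← lintegral_const_mul' _ _ hK]
      refine lintegral_mono fun t => ?_
      simpa [hp0] using hKb (Y m ω t) 0
    refine ⟨hmem.toLp _, subset_closure ⟨Y m ω, hv, h1', fun k => ?_, hmem.coeFn_toLp⟩,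
      hmem.coeFn_toLp⟩
    by_contra hk
    exact h2 (Set.mem_iUnion.2 ⟨k, h1', not_le.1 hk⟩)
  have hbad : P m (B0 ∪ ⋃ k, B k) ≤ ENNReal.ofReal ε := by
    refine (measure_union_le _ _).trans ?_
    rw [← ENNReal.add_halves (ENNReal.ofReal ε)]
    refine add_le_add ((le_iSup (fun m => P m {ω | ENNReal.ofReal N <
      ∫⁻ t in Set.Ioc (0:ℝ) T, ‖Y m ω t‖ₑ ^ p}) m).trans hN) ?_
    refine (measure_iUnion_le _).trans ?_
    exact (ENNReal.tsum_le_tsum fun k => hnP k m).trans hesum.le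
  rw [ENNReal.ofReal_sub _ hε.le, ENNReal.ofReal_one, tsub_le_iff_right]
  calc (1 : ℝ≥0∞) = P m Set.univ := measure_univ.symm
    _ ≤ P m (G ∪ (B0 ∪ ⋃ k, B k)) := measure_mono hcover
    _ ≤ P m G + P m (B0 ∪ ⋃ k, B k) := measure_union_le _ _
    _ ≤ P m G + ENNReal.ofReal ε := by gcongr
end

section
/- Let 1 ≤ p < ∞ and T > 0. Let V, H, Y be Banach spaces with continuous embeddings V ⊂ H ⊂ Y such that the embedding V ⊂ H is compact. If Γ is a bounded subset of L^p(0,T;V) satisfying lim_{δ→0⁺} sup_{f∈Γ} ∫₀^{T−δ} ‖f(t+δ) − f(t)‖_Y^p dt = 0, then Γ is a relatively compact subset of L^p(0,T;H). -/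
open Filter Topology MeasureTheory
open scoped ENNReal

lemma aux_ehrling {V H Yb : Type*}
    [NormedAddCommGroup V] [NormedSpace ℝ V]
    [NormedAddCommGroup H] [NormedSpace ℝ H]
    [NormedAddCommGroup Yb] [NormedSpace ℝ Yb]
    (eVH : V →L[ℝ] H) (hcpt : IsCompactOperator eVH)
    (eHY : H →L[ℝ] Yb) (heHY : Function.Injective eHY) (η : ℝ) (hη : 0 < η) :
    ∃ C : ℝ, 0 ≤ C ∧ ∀ x, ‖eVH x‖ ≤ η * ‖x‖ + C * ‖eHY (eVH x)‖ := by
  by_contra! hcon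
  have h1 : ∀ n : ℕ, ∃ z : V, ‖z‖ = 1 ∧ η + (n + 1) * ‖eHY (eVH z)‖ < ‖eVH z‖ := by
    intro n
    obtain ⟨x, hx⟩ := hcon (n + 1) (by positivity)
    have hx0 : x ≠ 0 := by
      rintro rfl
      simp at hx
    have hxn : 0 < ‖x‖ := norm_pos_iff.2 hx0
    refine ⟨‖x‖⁻¹ • x, ?_, ?_⟩
    · rw [norm_smul, norm_inv, norm_norm, inv_mul_cancel₀ hxn.ne']
    · simp only [map_smul, norm_smul, norm_inv, norm_norm]
      have := mul_lt_mul_of_pos_left hx (inv_pos.2 hxn)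
      calc _ = ‖x‖⁻¹ * (η * ‖x‖ + (n + 1) * ‖eHY (eVH x)‖) := by field_simp
        _ < _ := this
  choose z hz1 hz2 using h1
  obtain ⟨K, hK, hKs⟩ := IsCompactOperator.image_closedBall_subset_compact
    (f := (eVH : V →ₗ[ℝ] H)) hcpt 1
  have hzK : ∀ n, eVH (z n) ∈ K := fun n => hKs ⟨z n, by simp [hz1 n], rfl⟩
  obtain ⟨h, -, φ, hφ, hlim⟩ := hK.tendsto_subseq hzK
  have hY : Tendsto (fun n => ‖eHY (eVH (z (φ n)))‖) atTop (𝓝 0) := by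
    have h2 : ∀ n : ℕ, ‖eHY (eVH (z (φ (n))))‖ ≤ ‖eVH‖ * (1 / ((n:ℝ) + 1)) := by
      intro n
      have h0' : (0:ℝ) < n + 1 := by positivity
      have hn : (n:ℝ) ≤ φ n := by exact_mod_cast hφ.id_le n
      rw [mul_one_div, le_div_iff₀ h0']
      have := hz2 (φ n)
      have h3 := eVH.le_opNorm (z (φ n))
      rw [hz1] at h3
      nlinarith [norm_nonneg (eHY (eVH (z (φ n))))]
    refine squeeze_zero (fun _ => norm_nonneg _) h2 ?_
    simpa using tendsto_one_div_add_atTop_nhds_zero_nat.const_mul ‖eVH‖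
  have hY2 : Tendsto (fun n => ‖eHY (eVH (z (φ n)))‖) atTop (𝓝 ‖eHY h‖) :=
    ((eHY.continuous.tendsto h).comp hlim).norm
  have h0 : eHY h = 0 := norm_eq_zero.1 (tendsto_nhds_unique hY2 hY)
  have h00 : h = 0 := heHY (by simp [h0])
  have hge : η ≤ ‖h‖ := by
    refine ge_of_tendsto' hlim.norm fun n => ?_
    have := hz2 (φ n)
    have h4 : (0:ℝ) ≤ ((φ n : ℝ) + 1) * ‖eHY (eVH (z (φ n)))‖ := by positivity
    simp only [Function.comp]
    linarith
  rw [h00, norm_zero] at hge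
  linarith

lemma aux_ehrling_p {V H Yb : Type*}
    [NormedAddCommGroup V] [NormedSpace ℝ V]
    [NormedAddCommGroup H] [NormedSpace ℝ H]
    [NormedAddCommGroup Yb] [NormedSpace ℝ Yb]
    (eVH : V →L[ℝ] H) (hcpt : IsCompactOperator eVH)
    (eHY : H →L[ℝ] Yb) (heHY : Function.Injective eHY) (p : ℝ) (hp : 1 ≤ p)
    (η : ℝ) (hη : 0 < η) :
    ∃ C : ℝ, 0 ≤ C ∧ ∀ x, ‖eVH x‖ₑ ^ p ≤ ENNReal.ofReal η * ‖x‖ₑ ^ p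
      + ENNReal.ofReal C * ‖eHY (eVH x)‖ₑ ^ p := by
  have hp0 : 0 < p := by linarith
  set η' : ℝ := (η / 2 ^ (p-1)) ^ (1/p) with hη'
  have hη'0 : 0 < η' := by positivity
  have h2 : 2 ^ (p-1) * η' ^ p = η := by
    rw [hη', ← Real.rpow_mul (by positivity), one_div, inv_mul_cancel₀ hp0.ne', Real.rpow_one]
    field_simp
  obtain ⟨C, hC, h⟩ := aux_ehrling eVH hcpt eHY heHY η' hη'0
  refine ⟨2 ^ (p-1) * C ^ p, by positivity, fun x => ?_⟩
  have h3 : ‖eVH x‖ₑ ≤ ENNReal.ofReal η' * ‖x‖ₑ + ENNReal.ofReal C * ‖eHY (eVH x)‖ₑ := by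
    simp only [← ofReal_norm]
    rw [← ENNReal.ofReal_mul hη'0.le, ← ENNReal.ofReal_mul hC, ← ENNReal.ofReal_add (by positivity) (by positivity)]
    exact ENNReal.ofReal_le_ofReal (h x)
  have e2 : (2:ℝ≥0∞) ^ (p-1) = ENNReal.ofReal (2 ^ (p-1)) := by
    rw [← ENNReal.ofReal_rpow_of_pos (by norm_num)]; simp
  calc ‖eVH x‖ₑ ^ p ≤ (ENNReal.ofReal η' * ‖x‖ₑ + ENNReal.ofReal C * ‖eHY (eVH x)‖ₑ) ^ p :=
        ENNReal.rpow_le_rpow h3 hp0.le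
    _ ≤ _ := ENNReal.rpow_add_le_mul_rpow_add_rpow _ _ hp
    _ = _ := by
      rw [ENNReal.mul_rpow_of_nonneg _ _ hp0.le, ENNReal.mul_rpow_of_nonneg _ _ hp0.le,
        ENNReal.ofReal_rpow_of_nonneg hη'0.le hp0.le, ENNReal.ofReal_rpow_of_nonneg hC hp0.le,
        mul_add, ← mul_assoc, ← mul_assoc, e2, ← ENNReal.ofReal_mul (by positivity),
        ← ENNReal.ofReal_mul (by positivity), h2]

lemma aux_sum (a : ℕ → ℝ) (ha : Monotone a) (f : ℝ → ℝ≥0∞) (n : ℕ) :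
    ∫⁻ t in Set.Ioc (a 0) (a n), f t
      = ∑ k ∈ Finset.range n, ∫⁻ t in Set.Ioc (a k) (a (k+1)), f t := by
  induction n with
  | zero => simp
  | succ n ih =>
    rw [Finset.sum_range_succ, ← ih, ← lintegral_union measurableSet_Ioc,
      Set.Ioc_union_Ioc_eq_Ioc (ha (Nat.zero_le n)) (ha (Nat.le_succ n))]
    exact Set.Ioc_disjoint_Ioc_of_le le_rfl

lemma aux_trans (F : ℝ → ℝ → ℝ≥0∞) (hF : Measurable (Function.uncurry F))
    (hsymm : ∀ s t, F s t = F t s) (hdiag : ∀ t, F t t = 0) (N : ℕ) (h T : ℝ)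
    (hh : 0 < h) (hT : N * h = T) (e : ℝ≥0∞)
    (hE : ∀ δ, 0 < δ → δ ≤ h → ∫⁻ t in Set.Ioc 0 (T - δ), F (t + δ) t ≤ e) :
    ∑ k ∈ Finset.range N, ∫⁻ t in Set.Ioc (k * h) ((k+1:ℕ) * h),
      ∫⁻ s in Set.Ioc (k * h) ((k+1:ℕ) * h), F t s ≤ ENNReal.ofReal (2 * h) * e := by
  set E : Set (ℝ × ℝ) := {x | 0 < x.1 ∧ x.1 ≤ T ∧ 0 < x.2 ∧ x.2 ≤ T ∧ x.2 - x.1 < h ∧ x.1 - x.2 < h} with hEdef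
  have hEm : MeasurableSet E := by
    simp only [hEdef]
    measurability
  set Q : ℝ × ℝ → ℝ≥0∞ := E.indicator (Function.uncurry F) with hQ
  have hQm : Measurable Q := hF.indicator hEm
  have hmono : Monotone (fun k : ℕ => (k:ℝ) * h) := fun i j hij => by
    have : (i:ℝ) ≤ j := by exact_mod_cast hij
    simp only
    gcongr
  have step1 : ∑ k ∈ Finset.range N, ∫⁻ t in Set.Ioc (k * h) ((k+1:ℕ) * h),
      ∫⁻ s in Set.Ioc (k * h) ((k+1:ℕ) * h), F t s ≤ ∫⁻ t, ∫⁻ s, Q (t, s) := by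
    calc _ ≤ ∑ k ∈ Finset.range N, ∫⁻ t in Set.Ioc (k * h) ((k+1:ℕ) * h), ∫⁻ s, Q (t, s) := by
          refine Finset.sum_le_sum fun k hk => ?_
          refine setLIntegral_mono' measurableSet_Ioc fun t ht => ?_
          rw [← lintegral_indicator measurableSet_Ioc]
          refine lintegral_mono fun s => ?_
          by_cases hs : s ∈ Set.Ioc ((k:ℝ) * h) ((k+1:ℕ) * h)
          swap
          · rw [Set.indicator_of_notMem hs]; exact zero_le
          rw [Set.indicator_of_mem hs]
          have hk' : ((k+1:ℕ):ℝ) * h ≤ T := by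
            rw [← hT]; exact hmono (Finset.mem_range.1 hk)
          have hk0 : 0 ≤ (k:ℝ) * h := by positivity
          have : ((t, s) : ℝ × ℝ) ∈ E := by
            have e1 : ((k+1:ℕ):ℝ) * h = k * h + h := by push_cast; ring
            obtain ⟨h1, h2⟩ := hs
            obtain ⟨h3, h4⟩ := ht
            refine ⟨?_, ?_, ?_, ?_, ?_, ?_⟩ <;> simp only <;> linarith
          rw [hQ, Set.indicator_of_mem this]
          rfl
      _ = ∫⁻ t in Set.Ioc (((0:ℕ):ℝ) * h) (N * h), ∫⁻ s, Q (t, s) :=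
          (aux_sum _ hmono _ N).symm
      _ ≤ _ := setLIntegral_le_lintegral _ _
  refine step1.trans ?_
  have step2 : ∫⁻ t, ∫⁻ s, Q (t, s) = ∫⁻ δ, ∫⁻ t, Q (t, t + δ) := by
    have : ∀ t : ℝ, ∫⁻ s, Q (t, s) = ∫⁻ δ, Q (t, t + δ) := fun t =>
      (lintegral_add_left_eq_self (fun s => Q (t, s)) t).symm
    simp_rw [this]
    refine lintegral_lintegral_swap (f := fun t δ => Q (t, t + δ)) ?_
    refine Measurable.aemeasurable ?_
    exact hQm.comp (by fun_prop)
  rw [step2]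
  calc ∫⁻ δ, ∫⁻ t, Q (t, t + δ) ≤ ∫⁻ δ, (Set.Ioo (-h) h).indicator (fun _ => e) δ := by
        refine lintegral_mono fun δ => ?_
        by_cases hδ : δ ∈ Set.Ioo (-h) h
        · rw [Set.indicator_of_mem hδ]
          rcases lt_trichotomy δ 0 with h0 | h0 | h0
          · have : ∫⁻ t, Q (t, t + δ) = ∫⁻ t, Q (t + -δ, t) := by
              rw [← lintegral_add_right_eq_self _ (-δ)]
              simp
            rw [this]
            refine le_trans ?_ (hE (-δ) (by linarith) (by linarith [hδ.1]))
            rw [← lintegral_indicator measurableSet_Ioc]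
            refine lintegral_mono fun t => ?_
            by_cases hm : ((t + -δ, t) : ℝ × ℝ) ∈ E
            · rw [hQ, Set.indicator_of_mem hm, Set.indicator_of_mem]
              · rfl
              · obtain ⟨h1, h2, h3, h4, -⟩ := hm
                simp only at h1 h2 h3 h4
                constructor <;> linarith
            · rw [hQ, Set.indicator_of_notMem hm]; exact zero_le
          · subst h0
            have : ∀ t : ℝ, Q (t, t + 0) = 0 := by
              intro t
              rw [add_zero, hQ]
              exact Set.indicator_apply_eq_zero.2 fun _ => hdiag t
            simp only [this, lintegral_zero, zero_le]
          · refine le_trans ?_ (hE δ h0 hδ.2.le)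
            rw [← lintegral_indicator measurableSet_Ioc]
            refine lintegral_mono fun t => ?_
            by_cases hm : ((t, t + δ) : ℝ × ℝ) ∈ E
            · rw [hQ, Set.indicator_of_mem hm, Set.indicator_of_mem]
              · exact (hsymm _ _).le
              · obtain ⟨h1, h2, h3, h4, -⟩ := hm
                simp only at h1 h2 h3 h4
                constructor <;> linarith
            · rw [hQ, Set.indicator_of_notMem hm]; exact zero_le
        · have : ∀ t : ℝ, Q (t, t + δ) = 0 := by
            intro t
            rw [hQ]
            refine Set.indicator_of_notMem ?_ _
            rintro ⟨-, -, -, -, h1, h2⟩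
            simp only at h1 h2
            exact hδ ⟨by linarith, by linarith⟩
          simp [this]
    _ = ENNReal.ofReal (2 * h) * e := by
        rw [lintegral_indicator measurableSet_Ioo, setLIntegral_const, Real.volume_Ioo, mul_comm]
        congr 2; ring

lemma aux_approx {V H Yb : Type*}
    [NormedAddCommGroup V] [NormedSpace ℝ V]
    [NormedAddCommGroup H] [NormedSpace ℝ H]
    [NormedAddCommGroup Yb] [NormedSpace ℝ Yb]
    (eVH : V →L[ℝ] H) (eHY : H →L[ℝ] Yb) (p : ℝ) (hp : 1 ≤ p)
    (N : ℕ) (h T M η C e ε : ℝ) (hh : 0 < h) (hT : N * h = T) (hM : 0 < M)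
    (hη : 0 < η) (hC : 0 ≤ C) (he : 0 ≤ e) (hε : 0 < ε)
    (hηε : 2 ^ p * η * M ≤ ε) (hCe : C * (2 * e) ≤ ε)
    (hEh : ∀ x, ‖eVH x‖ₑ ^ p ≤ ENNReal.ofReal η * ‖x‖ₑ ^ p
      + ENNReal.ofReal C * ‖eHY (eVH x)‖ₑ ^ p)
    (f : ℝ → V) (hf : StronglyMeasurable f)
    (hb : ∫⁻ t in Set.Ioc (0:ℝ) T, ‖f t‖ₑ ^ p ≤ ENNReal.ofReal M)
    (hE : ∀ δ, 0 < δ → δ ≤ h → ∫⁻ t in Set.Ioc 0 (T - δ),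
      ‖eHY (eVH (f (t + δ))) - eHY (eVH (f t))‖ₑ ^ p ≤ ENNReal.ofReal e) :
    ∃ c : ℕ → V, (∀ k < N, ‖c k‖ ≤ (3 * M / h) ^ (1/p)) ∧
      ∑ k ∈ Finset.range N, ∫⁻ t in Set.Ioc (k * h) ((k+1:ℕ) * h),
        ‖eVH (f t) - eVH (c k)‖ₑ ^ p ≤ ENNReal.ofReal (3 * ε) := by
  have hp0 : 0 < p := by linarith
  have hmono : Monotone (fun k : ℕ => (k:ℝ) * h) := fun i j hij => by
    have : (i:ℝ) ≤ j := by exact_mod_cast hij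
    simp only
    gcongr
  set I : ℕ → Set ℝ := fun k => Set.Ioc (k * h) ((k+1:ℕ) * h) with hI
  have hvol : ∀ k, volume (I k) = ENNReal.ofReal h := by
    intro k
    simp only [hI, Real.volume_Ioc]
    congr 1; push_cast; ring
  have hh0 : ENNReal.ofReal h ≠ 0 := by simpa using hh
  have hsumf : ∑ k ∈ Finset.range N, ∫⁻ t in I k, ‖f t‖ₑ ^ p ≤ ENNReal.ofReal M := by
    rw [← aux_sum _ hmono _ N]
    simpa [hT] using hb
  have hfm2 : StronglyMeasurable (fun x : ℝ × ℝ => f x.1 - f x.2) :=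
    (hf.comp_measurable measurable_fst).sub (hf.comp_measurable measurable_snd)
  have hm0 : Measurable (fun t : ℝ => ‖f t‖ₑ ^ p) := hf.enorm.pow_const p
  have hmH : Measurable (fun x : ℝ × ℝ => ‖eVH (f x.1 - f x.2)‖ₑ ^ p) :=
    (eVH.continuous.comp_stronglyMeasurable hfm2).enorm.pow_const p
  have hmY : Measurable (fun x : ℝ × ℝ => ‖eHY (eVH (f x.1 - f x.2))‖ₑ ^ p) :=
    (eHY.continuous.comp_stronglyMeasurable
      (eVH.continuous.comp_stronglyMeasurable hfm2)).enorm.pow_const p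
  set B : ℕ → ℝ≥0∞ := fun k => ∫⁻ s in I k, ∫⁻ t in I k, ‖eVH (f s - f t)‖ₑ ^ p with hB
  set D : ℕ → ℝ≥0∞ := fun k => ∫⁻ s in I k, ∫⁻ t in I k, ‖eHY (eVH (f s - f t))‖ₑ ^ p with hD
  have hDsum : ∑ k ∈ Finset.range N, D k ≤ ENNReal.ofReal (2 * h) * ENNReal.ofReal e := by
    refine aux_trans (fun s t => ‖eHY (eVH (f s - f t))‖ₑ ^ p) hmY ?_ ?_ N h T hh hT _ ?_
    · intro s t
      rw [← neg_sub, map_neg, map_neg, enorm_neg]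
    · intro t
      simp [hp0]
    · intro δ h1 h2
      simpa using hE δ h1 h2
  have hBk : ∀ k, B k ≤ ENNReal.ofReal (2 ^ p * η * h) * (∫⁻ t in I k, ‖f t‖ₑ ^ p)
      + ENNReal.ofReal C * D k := by
    intro k
    have h2p : (2:ℝ≥0∞) ^ (p-1) = ENNReal.ofReal (2 ^ (p-1)) := by
      rw [← ENNReal.ofReal_rpow_of_pos (by norm_num)]; simp
    have pw : ∀ s t, ‖eVH (f s - f t)‖ₑ ^ p ≤
        ENNReal.ofReal (2 ^ (p-1) * η) * (‖f s‖ₑ ^ p + ‖f t‖ₑ ^ p)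
          + ENNReal.ofReal C * ‖eHY (eVH (f s - f t))‖ₑ ^ p := by
      intro s t
      refine (hEh _).trans ?_
      refine add_le_add ?_ le_rfl
      calc ENNReal.ofReal η * ‖f s - f t‖ₑ ^ p
          ≤ ENNReal.ofReal η * ((2:ℝ≥0∞) ^ (p-1) * (‖f s‖ₑ ^ p + ‖f t‖ₑ ^ p)) := by
            gcongr
            exact (ENNReal.rpow_le_rpow (enorm_sub_le) hp0.le).trans
              (ENNReal.rpow_add_le_mul_rpow_add_rpow _ _ hp)
        _ = _ := by
          rw [h2p, ← mul_assoc, ← ENNReal.ofReal_mul hη.le, mul_comm η]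
    have hm5 : ∀ s, Measurable fun t => ‖eHY (eVH (f s - f t))‖ₑ ^ p := fun s =>
      hmY.comp measurable_prodMk_left
    calc B k ≤ ∫⁻ s in I k, ∫⁻ t in I k, (ENNReal.ofReal (2 ^ (p-1) * η) * (‖f s‖ₑ ^ p + ‖f t‖ₑ ^ p)
          + ENNReal.ofReal C * ‖eHY (eVH (f s - f t))‖ₑ ^ p) :=
          lintegral_mono fun s => lintegral_mono fun t => pw s t
      _ = ∫⁻ s in I k, (ENNReal.ofReal (2 ^ (p-1) * η) * (‖f s‖ₑ ^ p * ENNReal.ofReal h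
            + ∫⁻ t in I k, ‖f t‖ₑ ^ p)
          + ENNReal.ofReal C * ∫⁻ t in I k, ‖eHY (eVH (f s - f t))‖ₑ ^ p) := by
          refine lintegral_congr fun s => ?_
          rw [lintegral_add_left (by fun_prop), lintegral_const_mul _ (by fun_prop),
            lintegral_add_left (by fun_prop), setLIntegral_const, hvol,
            lintegral_const_mul _ (hm5 s)]
      _ = _ := by
          have hm3 : Measurable fun s => ∫⁻ t in I k, ‖eHY (eVH (f s - f t))‖ₑ ^ p :=
            Measurable.lintegral_prod_right' (f := fun x : ℝ × ℝ => ‖eHY (eVH (f x.1 - f x.2))‖ₑ ^ p) hmY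
          rw [lintegral_add_left (by fun_prop), lintegral_const_mul _ (by fun_prop),
            lintegral_add_left (by fun_prop), setLIntegral_const, hvol,
            lintegral_const_mul _ hm3, lintegral_mul_const _ hm0]
          congr 1
          rw [mul_comm _ (ENNReal.ofReal h), ← two_mul, ← mul_assoc, ← mul_assoc]
          congr 1
          rw [show (2:ℝ≥0∞) = ENNReal.ofReal 2 by simp, ← ENNReal.ofReal_mul (by positivity),
            ← ENNReal.ofReal_mul (by positivity)]
          congr 1
          rw [Real.rpow_sub_one (by norm_num)]
          ring
  have hBsum : ∑ k ∈ Finset.range N, B k ≤ ENNReal.ofReal (2 * ε * h) := by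
    calc _ ≤ ∑ k ∈ Finset.range N, (ENNReal.ofReal (2 ^ p * η * h) * (∫⁻ t in I k, ‖f t‖ₑ ^ p)
      + ENNReal.ofReal C * D k) := Finset.sum_le_sum fun k _ => hBk k
      _ ≤ ENNReal.ofReal (2 ^ p * η * h) * ENNReal.ofReal M
          + ENNReal.ofReal C * (ENNReal.ofReal (2 * h) * ENNReal.ofReal e) := by
        rw [Finset.sum_add_distrib, ← Finset.mul_sum, ← Finset.mul_sum]
        gcongr
      _ ≤ _ := by
        rw [← ENNReal.ofReal_mul (by positivity), ← ENNReal.ofReal_mul (by positivity),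
          ← ENNReal.ofReal_mul (by positivity), ← ENNReal.ofReal_add (by positivity) (by positivity)]
        refine ENNReal.ofReal_le_ofReal ?_
        nlinarith
  -- selection of the sample points
  set ψ : ℕ → ℝ → ℝ≥0∞ := fun k s => (∫⁻ t in I k, ‖eVH (f s - f t)‖ₑ ^ p)
    + ENNReal.ofReal (ε * h / M) * ‖f s‖ₑ ^ p with hψ
  have hmH' : ∀ k, Measurable fun s => ∫⁻ t in I k, ‖eVH (f s - f t)‖ₑ ^ p := fun k =>
    Measurable.lintegral_prod_right' (f := fun x : ℝ × ℝ => ‖eVH (f x.1 - f x.2)‖ₑ ^ p) hmH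
  have hsel : ∀ k, ∃ s, ψ k s * ENNReal.ofReal h ≤
      B k + ENNReal.ofReal (ε * h / M) * ∫⁻ t in I k, ‖f t‖ₑ ^ p := by
    intro k
    obtain ⟨s, -, hs⟩ := exists_le_setLAverage (μ := volume) (s := I k) (f := ψ k)
      (by rw [hvol]; exact hh0) (by rw [hvol]; exact ENNReal.ofReal_ne_top)
      (((hmH' k).add (hm0.const_mul _)).aemeasurable)
    refine ⟨s, ?_⟩
    rw [setLAverage_eq, hvol] at hs
    have := (ENNReal.le_div_iff_mul_le (Or.inl hh0) (Or.inl ENNReal.ofReal_ne_top)).1 hs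
    refine this.trans (le_of_eq ?_)
    rw [hψ]
    simp only
    rw [lintegral_add_left (hmH' k), lintegral_const_mul _ hm0]
  choose s hs using hsel
  have htot : ∑ k ∈ Finset.range N, ψ k (s k) ≤ ENNReal.ofReal (3 * ε) := by
    have h1 : (∑ k ∈ Finset.range N, ψ k (s k)) * ENNReal.ofReal h ≤
        ENNReal.ofReal (3 * ε) * ENNReal.ofReal h := by
      rw [Finset.sum_mul]
      calc _ ≤ ∑ k ∈ Finset.range N, (B k + ENNReal.ofReal (ε * h / M) * ∫⁻ t in I k, ‖f t‖ₑ ^ p) :=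
            Finset.sum_le_sum fun k _ => hs k
        _ ≤ ENNReal.ofReal (2 * ε * h) + ENNReal.ofReal (ε * h / M) * ENNReal.ofReal M := by
            rw [Finset.sum_add_distrib, ← Finset.mul_sum]
            gcongr
        _ = _ := by
            rw [← ENNReal.ofReal_mul (by positivity), ← ENNReal.ofReal_mul (by positivity),
              ← ENNReal.ofReal_add (by positivity) (by positivity)]
            congr 1
            field_simp
            ring
    exact (ENNReal.mul_le_mul_iff_left hh0 ENNReal.ofReal_ne_top).1 h1
  refine ⟨fun k => f (s k), fun k hk => ?_, ?_⟩
  · have h1 : ENNReal.ofReal (ε * h / M) * ‖f (s k)‖ₑ ^ p ≤ ENNReal.ofReal (3 * ε) :=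
      le_trans (le_trans le_add_self
        (Finset.single_le_sum (f := fun k => ψ k (s k)) (fun _ _ => zero_le)
          (Finset.mem_range.2 hk))) htot
    rw [← ofReal_norm, ENNReal.ofReal_rpow_of_nonneg (norm_nonneg _) hp0.le,
      ← ENNReal.ofReal_mul (by positivity), ENNReal.ofReal_le_ofReal_iff (by positivity)] at h1
    rw [one_div, Real.le_rpow_inv_iff_of_pos (norm_nonneg _) (by positivity) hp0,
      le_div_iff₀ hh]
    have h2 : ε * (‖f (s k)‖ ^ p * h) ≤ ε * (3 * M) := by
      have := mul_le_mul_of_nonneg_right h1 hM.le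
      calc _ = ε * h / M * ‖f (s k)‖ ^ p * M := by field_simp
        _ ≤ _ := this
        _ = _ := by ring
    exact le_of_mul_le_mul_left h2 hε
  · refine le_trans (Finset.sum_le_sum fun k _ => ?_) htot
    refine le_trans (le_of_eq ?_) le_self_add
    refine lintegral_congr fun t => ?_
    rw [← map_sub, ← neg_sub, map_neg, enorm_neg]

lemma aux_modif {V Yb : Type*}
    [NormedAddCommGroup V] [NormedSpace ℝ V]
    [NormedAddCommGroup Yb] [NormedSpace ℝ Yb]
    (L : V → Yb) (p : ℝ) (T : ℝ) (f g : ℝ → V)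
    (hfg : f =ᵐ[volume.restrict (Set.Ioc (0:ℝ) T)] g) (δ : ℝ) (hδ : 0 < δ) :
    ∫⁻ t in Set.Ioc (0:ℝ) (T - δ), ‖L (f (t + δ)) - L (f t)‖ₑ ^ p
      = ∫⁻ t in Set.Ioc (0:ℝ) (T - δ), ‖L (g (t + δ)) - L (g t)‖ₑ ^ p := by
  have h1 : ∀ᵐ t : ℝ, t ∈ Set.Ioc (0:ℝ) T → f t = g t := (ae_restrict_iff' measurableSet_Ioc).1 hfg
  have h2 : ∀ᵐ t : ℝ, t + δ ∈ Set.Ioc (0:ℝ) T → f (t + δ) = g (t + δ) :=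
    (measurePreserving_add_right volume δ).quasiMeasurePreserving.ae h1
  refine lintegral_congr_ae ((ae_restrict_iff' measurableSet_Ioc).2 ?_)
  filter_upwards [h1, h2] with t ht1 ht2 ht
  rw [ht1 ⟨ht.1, by linarith [ht.2]⟩, ht2 ⟨by linarith [ht.1], by linarith [ht.2]⟩]

lemma aux_tb {V H Yb : Type*}
    [NormedAddCommGroup V] [NormedSpace ℝ V]
    [NormedAddCommGroup H] [NormedSpace ℝ H]
    [NormedAddCommGroup Yb] [NormedSpace ℝ Yb]
    (eVH : V →L[ℝ] H) (hcpt : IsCompactOperator eVH)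
    (eHY : H →L[ℝ] Yb) (heHY : Function.Injective eHY)
    (p : ℝ) (hp : 1 ≤ p) [Fact (1 ≤ ENNReal.ofReal p)] (T : ℝ) (hT : 0 < T)
    (Γ : Set (ℝ → V))
    (hmeas : ∀ f ∈ Γ, AEStronglyMeasurable f (volume.restrict (Set.Ioc (0:ℝ) T)))
    (hbdd : ∃ C : ℝ≥0∞, C < ⊤ ∧ ∀ f ∈ Γ,
      (∫⁻ t in Set.Ioc (0:ℝ) T, ‖f t‖ₑ ^ p) ≤ C)
    (hequi : ∀ ε > (0:ℝ), ∃ δ₀ > (0:ℝ), ∀ δ : ℝ, 0 < δ → δ ≤ δ₀ → ∀ f ∈ Γ,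
      (∫⁻ t in Set.Ioc (0:ℝ) (T - δ),
        ‖eHY (eVH (f (t + δ))) - eHY (eVH (f t))‖ₑ ^ p)
        ≤ ENNReal.ofReal ε) :
    TotallyBounded {g : Lp H (ENNReal.ofReal p) (volume.restrict (Set.Ioc (0:ℝ) T)) |
      ∃ f ∈ Γ, ⇑g =ᵐ[volume.restrict (Set.Ioc (0:ℝ) T)] fun t => eVH (f t)} := by
  have hp0 : 0 < p := by linarith
  rw [Metric.totallyBounded_iff]
  intro ε hε
  obtain ⟨C0, hC0, hC0b⟩ := hbdd
  set M : ℝ := C0.toReal + 1 with hMdef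
  have hM : 0 < M := by positivity
  have hC0M : C0 ≤ ENNReal.ofReal M := by
    rw [ENNReal.le_ofReal_iff_toReal_le hC0.ne hM.le]; linarith
  set ε1 : ℝ := (ε / 2) ^ p / 3 with hε1def
  have hε1 : 0 < ε1 := by positivity
  set η : ℝ := ε1 / (2 ^ p * M) with hηdef
  have hη : 0 < η := by positivity
  obtain ⟨C, hC, hEh⟩ := aux_ehrling_p eVH hcpt eHY heHY p hp η hη
  set e : ℝ := ε1 / (2 * (C + 1)) with hedef
  have he : 0 < e := by positivity
  obtain ⟨δ₀, hδ₀, heq⟩ := hequi e he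
  obtain ⟨N, hN⟩ := exists_nat_gt (T / δ₀)
  have hN0 : (0:ℝ) < N := lt_trans (by positivity) hN
  set h : ℝ := T / N with hhdef
  have hh : 0 < h := by positivity
  have hNh : N * h = T := by rw [hhdef]; field_simp
  have hhδ : h ≤ δ₀ := by
    rw [hhdef, div_le_iff₀ hN0]
    rw [div_lt_iff₀ hδ₀] at hN
    linarith
  have key : ∀ f ∈ Γ, ∃ c : ℕ → V, (∀ k < N, ‖c k‖ ≤ (3 * M / h) ^ (1/p)) ∧
      ∑ k ∈ Finset.range N, ∫⁻ t in Set.Ioc (k * h) ((k+1:ℕ) * h),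
        ‖eVH (f t) - eVH (c k)‖ₑ ^ p ≤ ENNReal.ofReal (3 * ε1) := by
    intro f hf
    have hmf := hmeas f hf
    have hae := hmf.ae_eq_mk
    obtain ⟨c, hc1, hc2⟩ := aux_approx eVH eHY p hp N h T M η C e ε1 hh hNh hM hη hC he.le hε1
      (by rw [hηdef]; apply le_of_eq; field_simp)
      (by
        rw [hedef, show C * (2 * (ε1 / (2 * (C + 1)))) = C * ε1 / (C + 1) by field_simp,
          div_le_iff₀ (by positivity)]
        nlinarith) hEh (hmf.mk f) hmf.stronglyMeasurable_mk
      (by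
        refine le_trans (le_of_eq ?_) ((hC0b f hf).trans hC0M)
        refine lintegral_congr_ae ?_
        filter_upwards [hae] with t ht
        rw [ht])
      (by
        intro δ h1 h2
        have h3 := heq δ h1 (h2.trans hhδ) f hf
        rwa [aux_modif (fun x => eHY (eVH x)) p T f (hmf.mk f) hae δ h1] at h3)
    refine ⟨c, hc1, le_trans (le_of_eq ?_) hc2⟩
    refine Finset.sum_congr rfl fun k hk => ?_
    refine lintegral_congr_ae ?_
    have hsub : Set.Ioc ((k:ℝ) * h) ((k+1:ℕ) * h) ⊆ Set.Ioc 0 T := by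
      refine Set.Ioc_subset_Ioc (by positivity) ?_
      rw [← hNh]
      have : ((k+1:ℕ):ℝ) ≤ N := by exact_mod_cast Finset.mem_range.1 hk
      gcongr
    filter_upwards [ae_restrict_of_ae_restrict_of_subset hsub hae] with t ht
    rw [ht]
  obtain ⟨K, hK, hKs⟩ := IsCompactOperator.image_closedBall_subset_compact
    (f := (eVH : V →ₗ[ℝ] H)) hcpt ((3 * M / h) ^ (1/p))
  set μ := volume.restrict (Set.Ioc (0:ℝ) T) with hμ
  have hfin : ∀ k : ℕ, μ (Set.Ioc ((k:ℝ) * h) ((k+1:ℕ) * h)) ≠ ⊤ := fun k => measure_ne_top _ _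
  set Φ : (ℕ → H) → Lp H (ENNReal.ofReal p) μ := fun c => ∑ k ∈ Finset.range N,
    indicatorConstLp (ENNReal.ofReal p) measurableSet_Ioc (hfin k) (c k) with hΦ
  have hΦc : Continuous Φ := by
    refine continuous_finsetSum _ fun k _ => ?_
    have hlip : Continuous fun x : H =>
        indicatorConstLp (ENNReal.ofReal p) measurableSet_Ioc (hfin k) x := by
      refine (LipschitzWith.of_dist_le_mul (K := (μ.real (Set.Ioc ((k:ℝ) * h) ((k+1:ℕ) * h)) ^
        (1 / (ENNReal.ofReal p).toReal)).toNNReal) fun x y => ?_).continuous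
      rw [dist_eq_norm, indicatorConstLp_sub, Real.coe_toNNReal _ (by positivity),
        dist_eq_norm]
      exact norm_indicatorConstLp_le.trans (le_of_eq (mul_comm _ _))
    exact hlip.comp (continuous_apply k)
  have hcomp : IsCompact (Φ '' (Set.pi Set.univ fun _ => insert 0 K)) :=
    (isCompact_univ_pi fun _ => hK.insert 0).image hΦc
  obtain ⟨t, htf, ht⟩ := Metric.totallyBounded_iff.1 hcomp.totallyBounded (ε/2) (by positivity)
  refine ⟨t, htf, ?_⟩
  rintro g ⟨f, hf, hgf⟩
  obtain ⟨c, hc1, hc2⟩ := key f hf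
  set d : ℕ → H := fun k => if k < N then eVH (c k) else 0 with hd
  have hdm : d ∈ Set.pi Set.univ fun _ => insert 0 K := by
    intro k _
    by_cases hk : k < N
    · simp only [hd, if_pos hk]
      exact Or.inr (hKs ⟨c k, by simpa using hc1 k hk, rfl⟩)
    · simp [hd, if_neg hk]
  have hdist : dist g (Φ d) ≤ ε / 2 := by
    have hcoe : ∀ᵐ x ∂μ, ∀ k < N, x ∈ Set.Ioc ((k:ℝ) * h) ((k+1:ℕ) * h) → Φ d x = eVH (c k) := by
      have h1 : ∀ᵐ x ∂μ, Φ d x = ∑ k ∈ Finset.range N,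
          indicatorConstLp (ENNReal.ofReal p) measurableSet_Ioc (hfin k) (d k) x := by
        exact Lp.coeFn_fun_finsetSum (p := ENNReal.ofReal p) (μ := μ) (Finset.range N)
          (fun k => indicatorConstLp (ENNReal.ofReal p) measurableSet_Ioc (hfin k) (d k))
      have h2 : ∀ᵐ x ∂μ, ∀ k : ℕ, indicatorConstLp (ENNReal.ofReal p) measurableSet_Ioc (hfin k) (d k) x
          = (Set.Ioc ((k:ℝ) * h) ((k+1:ℕ) * h)).indicator (fun _ => d k) x :=
        ae_all_iff.2 fun k => indicatorConstLp_coeFn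
      filter_upwards [h1, h2] with x hx1 hx2 k hk hxk
      rw [hx1, Finset.sum_eq_single k, hx2, Set.indicator_of_mem hxk]
      · simp [hd, hk]
      · intro j _ hjk
        rw [hx2, Set.indicator_of_notMem]
        intro hxj
        have hmono : Monotone (fun k : ℕ => (k:ℝ) * h) := fun i j hij => by
          have : (i:ℝ) ≤ j := by exact_mod_cast hij
          simp only
          gcongr
        rcases lt_or_gt_of_ne hjk with hlt | hlt
        · have := hmono (Nat.succ_le_of_lt hlt)
          simp only [Nat.succ_eq_add_one] at this
          linarith [hxj.2, hxk.1]
        · have := hmono (Nat.succ_le_of_lt hlt)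
          simp only [Nat.succ_eq_add_one] at this
          linarith [hxk.2, hxj.1]
      · intro hk'
        exact absurd (Finset.mem_range.2 hk) hk'
    have hed : edist g (Φ d) ≤ ENNReal.ofReal (ε / 2) := by
      rw [Lp.edist_def, eLpNorm_eq_lintegral_rpow_enorm_toReal (by simpa using hp0) ENNReal.ofReal_ne_top,
        ENNReal.toReal_ofReal hp0.le]
      have hmono : Monotone (fun k : ℕ => (k:ℝ) * h) := fun i j hij => by
        have : (i:ℝ) ≤ j := by exact_mod_cast hij
        simp only
        gcongr
      have hsum := aux_sum _ hmono (fun x => ‖(⇑g - ⇑(Φ d)) x‖ₑ ^ p) N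
      simp only [Nat.cast_zero, zero_mul, hNh] at hsum
      change (∫⁻ x in Set.Ioc 0 T, ‖(⇑g - ⇑(Φ d)) x‖ₑ ^ p) ^ (1/p) ≤ _
      rw [hsum]
      have : (∑ k ∈ Finset.range N, ∫⁻ t in Set.Ioc (k * h) ((k+1:ℕ) * h),
          ‖(⇑g - ⇑(Φ d)) t‖ₑ ^ p) ≤ ENNReal.ofReal ((ε/2) ^ p) := by
        refine le_trans (le_of_eq ?_) (hc2.trans (le_of_eq (by rw [hε1def]; congr 1; ring)))
        refine Finset.sum_congr rfl fun k hk => ?_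
        have hk' := Finset.mem_range.1 hk
        have hsub : Set.Ioc ((k:ℝ) * h) ((k+1:ℕ) * h) ⊆ Set.Ioc 0 T := by
          refine Set.Ioc_subset_Ioc (by positivity) ?_
          rw [← hNh]
          have : ((k+1:ℕ):ℝ) ≤ N := by exact_mod_cast hk'
          gcongr
        refine lintegral_congr_ae ?_
        filter_upwards [ae_restrict_of_ae_restrict_of_subset hsub hgf,
          ae_restrict_of_ae_restrict_of_subset hsub hcoe,
          ae_restrict_mem measurableSet_Ioc] with x h1 h2 h3
        rw [Pi.sub_apply, h1, h2 k hk' h3]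
      refine (ENNReal.rpow_le_rpow this (by positivity)).trans (le_of_eq ?_)
      rw [← ENNReal.ofReal_rpow_of_pos (by positivity), ← ENNReal.rpow_mul,
        mul_one_div_cancel hp0.ne', ENNReal.rpow_one]
    rw [edist_dist] at hed
    exact (ENNReal.ofReal_le_ofReal_iff (by positivity)).1 hed
  have := ht ⟨d, hdm, rfl⟩
  simp only [Set.mem_iUnion, Metric.mem_ball] at this ⊢
  obtain ⟨y, hy, hyd⟩ := this
  refine ⟨y, hy, ?_⟩
  linarith [dist_triangle g (Φ d) y]

theorem stmt_9 {V H Yb : Type*}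
    [NormedAddCommGroup V] [NormedSpace ℝ V]
    [NormedAddCommGroup H] [NormedSpace ℝ H]
    [NormedAddCommGroup Yb] [NormedSpace ℝ Yb]
    (eVH : V →L[ℝ] H) (heVH : Function.Injective eVH) (hcpt : IsCompactOperator eVH)
    (eHY : H →L[ℝ] Yb) (heHY : Function.Injective eHY)
    (p : ℝ) (hp : 1 ≤ p) [Fact (1 ≤ ENNReal.ofReal p)] (T : ℝ) (hT : 0 < T)
    (Γ : Set (ℝ → V))
    (hmeas : ∀ f ∈ Γ, AEStronglyMeasurable f (volume.restrict (Set.Ioc (0:ℝ) T)))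
    (hbdd : ∃ C : ℝ≥0∞, C < ⊤ ∧ ∀ f ∈ Γ,
      (∫⁻ t in Set.Ioc (0:ℝ) T, (‖f t‖₊ : ℝ≥0∞) ^ p) ≤ C)
    (hequi : ∀ ε > (0:ℝ), ∃ δ₀ > (0:ℝ), ∀ δ : ℝ, 0 < δ → δ ≤ δ₀ → ∀ f ∈ Γ,
      (∫⁻ t in Set.Ioc (0:ℝ) (T - δ),
        (‖eHY (eVH (f (t + δ))) - eHY (eVH (f t))‖₊ : ℝ≥0∞) ^ p)
        ≤ ENNReal.ofReal ε) :
    IsCompact (closure {g : Lp H (ENNReal.ofReal p) (volume.restrict (Set.Ioc (0:ℝ) T)) |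
      ∃ f ∈ Γ, ⇑g =ᵐ[volume.restrict (Set.Ioc (0:ℝ) T)] fun t => eVH (f t)}) := by
  have hp0 : 0 < p := by linarith
  have htb := aux_tb eVH hcpt eHY heHY p hp T hT Γ hmeas hbdd hequi
  set μ := volume.restrict (Set.Ioc (0:ℝ) T) with hμ
  set S := {g : Lp H (ENNReal.ofReal p) μ | ∃ f ∈ Γ, ⇑g =ᵐ[μ] fun t => eVH (f t)} with hS
  let ι : H →ₗᵢ[ℝ] UniformSpace.Completion H := UniformSpace.Completion.toComplₗᵢ
  let J : Lp H (ENNReal.ofReal p) μ →L[ℝ] Lp (UniformSpace.Completion H) (ENNReal.ofReal p) μ :=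
    ContinuousLinearMap.compLpL (ENNReal.ofReal p) μ ι.toContinuousLinearMap
  have hJ : ∀ g, ∀ᵐ x ∂μ, J g x = ι (g x) := fun g =>
    ContinuousLinearMap.coeFn_compLp ι.toContinuousLinearMap g
  have hJiso : Isometry J := by
    refine AddMonoidHomClass.isometry_of_norm J fun g => ?_
    rw [Lp.norm_def, Lp.norm_def]
    congr 1
    refine eLpNorm_congr_norm_ae ?_
    filter_upwards [hJ g] with x hx
    rw [hx, ι.norm_map]
  have hind := hJiso.isUniformInducing.isInducing
  rw [hind.closure_eq_preimage_closure_image]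
  refine hind.isCompact_preimage' ?_ ?_
  · exact (htb.image hJiso.uniformContinuous).closure.isCompact_of_isClosed isClosed_closure
  · intro G hG
    obtain ⟨u, hu, hlim⟩ := mem_closure_iff_seq_limit.1 hG
    choose g hgS hgu using hu
    choose f hfΓ hgf using hgS
    obtain ⟨ns, hns, hae⟩ := (tendstoInMeasure_of_tendsto_Lp hlim).exists_seq_tendsto_ae
    obtain ⟨C, hC, hCb⟩ := hbdd
    have hfat : ∫⁻ t, liminf (fun i => ‖f (ns i) t‖ₑ ^ p) atTop ∂μ ≤ C := by
      refine (lintegral_liminf_le' fun i => ?_).trans ?_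
      · exact (hmeas _ (hfΓ _)).enorm.pow_const p
      · refine liminf_le_of_le (by isBoundedDefault) fun b hb => ?_
        obtain ⟨n, hn⟩ := hb.exists
        exact hn.trans (hCb _ (hfΓ _))
    have hfin : ∀ᵐ t ∂μ, liminf (fun i => ‖f (ns i) t‖ₑ ^ p) atTop < ⊤ := by
      refine ae_lt_top' ?_ (hfat.trans_lt hC).ne
      have hm : ∀ i, AEMeasurable (fun t => ‖f (ns i) t‖ₑ ^ p) μ := fun i =>
        (hmeas _ (hfΓ _)).enorm.pow_const p
      refine ⟨fun t => liminf (fun i => (hm i).mk _ t) atTop,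
        Measurable.liminf fun i => (hm i).measurable_mk, ?_⟩
      filter_upwards [ae_all_iff.2 fun i => (hm i).ae_eq_mk] with t ht
      simp only [ht]
    have hrange : ∀ᵐ t ∂μ, ∃ y : H, ι y = G t := by
      have h1 : ∀ᵐ t ∂μ, ∀ n, u n t = ι (eVH (f n t)) := by
        refine ae_all_iff.2 fun n => ?_
        filter_upwards [hJ (g n), hgf n] with t h1 h2
        rw [← hgu n, h1, h2]
      filter_upwards [h1, hae, hfin] with t h1 h2 h3
      obtain ⟨r, hr1, hr2⟩ := exists_between h3
      have hfr := frequently_lt_of_liminf_lt (by isBoundedDefault) hr1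
      obtain ⟨φ, hφ, hφr⟩ := extraction_of_frequently_atTop hfr
      set R : ℝ := (r ^ (1/p)).toReal with hR
      have hrtop : r ^ (1/p) ≠ ⊤ := ENNReal.rpow_ne_top_of_nonneg (by positivity) hr2.ne
      obtain ⟨K, hK, hKs⟩ := IsCompactOperator.image_closedBall_subset_compact
        (f := (eVH : V →ₗ[ℝ] H)) hcpt R
      have hmem : ∀ n, eVH (f (ns (φ n)) t) ∈ K := by
        intro n
        refine hKs ⟨f (ns (φ n)) t, ?_, rfl⟩
        rw [mem_closedBall_zero_iff, hR, ← ENNReal.ofReal_le_iff_le_toReal hrtop, ofReal_norm,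
          one_div, ENNReal.le_rpow_inv_iff hp0]
        exact (hφr n).le
      obtain ⟨y, -, θ, hθ, hy⟩ := hK.tendsto_subseq hmem
      refine ⟨y, ?_⟩
      have l1 := (ι.continuous.tendsto y).comp hy
      have l2 := h2.comp (hφ.comp hθ).tendsto_atTop
      refine tendsto_nhds_unique l1 (l2.congr fun n => ?_)
      simp only [Function.comp]
      rw [h1]
    classical
    let w : ℝ → H := fun t => if ht : ∃ y : H, ι y = G t then ht.choose else 0
    have hw : ∀ᵐ t ∂μ, ι (w t) = G t := by
      filter_upwards [hrange] with t ht
      simp only [w, dif_pos ht]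
      exact ht.choose_spec
    have hwm : AEStronglyMeasurable w μ := by
      refine ι.isometry.isEmbedding.aestronglyMeasurable_comp_iff.1 ?_
      exact (Lp.aestronglyMeasurable G).congr (hw.mono fun t ht => ht.symm)
    have hwL : MemLp w (ENNReal.ofReal p) μ := by
      refine (Lp.memLp G).of_le hwm (hw.mono fun t ht => ?_)
      rw [← ht, ι.norm_map]
    refine ⟨hwL.toLp w, ?_⟩
    refine Lp.ext ?_
    filter_upwards [hJ (hwL.toLp w), hwL.coeFn_toLp, hw] with t h1 h2 h3
    rw [h1, h2, h3]
end
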